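/- arXiv:2510.08423 — 9 statements merged into one kernel-verified Lean document; each statement's English description precedes it below -/
import Mathlib

section
/- Let 𝒳, 𝒴, 𝒜, ℬ be finite nonempty sets, let κ ≥ 0 and ϑ > 0, and set β := κ/(κ+ϑ), h_ϑ := (1/|𝒴|)·(1/|𝒳| + κ + ϑ) and l_ϑ := (1/|𝒴|)·(1 − (|𝒳|−1)·(1/|𝒳| + κ + ϑ)). Then every P ∈ AMDL(κ) can be written as P = (1−β)·L + β·S, where L belongs to the measurement-dependent local set MDL(l_ϑ, h_ϑ) and S is some probability distribution on 𝒜×ℬ×𝒳×𝒴. -/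
/-!
Call a hidden value `γ` *good* if every `P(x|γ)` is at most `1/|𝒳| + κ + ϑ`. Markov's inequality,
applied to the nonnegative function `max_x P(x|γ) - 1/|𝒳|`, whose mean is at most `κ`, shows that
the bad values have mass at most `κ/(κ+ϑ) = β`, so the good set `G` has mass at least
`1 - β > 0`. Let `L` be the behavior obtained by conditioning `g` on `G`. On `G` the upper bound
holds by definition, and the lower bound follows since the other `|𝒳| - 1` probabilities
are each at most `1/|𝒳| + κ + ϑ`.

As the integrand is nonnegative, `(1 - β) L ≤ g(G) L ≤ P`. Both `P` and `L` have total mass one, so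
`P - (1 - β) L` is nonnegative of total mass `β`; it is `β S` for a behavior `S`.
-/

/-- A behavior: probability distribution on `𝒜 × ℬ × 𝒳 × 𝒴`. -/
def IsBehavior {X Y A B : Type} [Fintype X] [Fintype Y] [Fintype A] [Fintype B]
    (P : A → B → X → Y → ℝ) : Prop :=
  (∀ a b x y, 0 ≤ P a b x y) ∧ (∑ a, ∑ b, ∑ x, ∑ y, P a b x y) = 1

/-- Witness that a behavior lies in the measurement-dependent local set `MDL(l,h)`. -/
structure MDLWitness (X Y A B : Type) [Fintype X] [Fintype Y] [Fintype A] [Fintype B]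
    (l h : ℝ) (P : A → B → X → Y → ℝ) where
  HV : Type
  [mHV : MeasurableSpace HV]
  g : MeasureTheory.Measure HV
  prob : MeasureTheory.IsProbabilityMeasure g
  pxy : HV → X → Y → ℝ
  pa : HV → X → A → ℝ
  pb : HV → Y → B → ℝ
  meas_pxy : ∀ x y, Measurable fun γ => pxy γ x y
  meas_pa : ∀ x a, Measurable fun γ => pa γ x a
  meas_pb : ∀ y b, Measurable fun γ => pb γ y b
  pxy_nonneg : ∀ γ x y, 0 ≤ pxy γ x y
  pxy_sum : ∀ γ, (∑ x, ∑ y, pxy γ x y) = 1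
  pa_nonneg : ∀ γ x a, 0 ≤ pa γ x a
  pa_sum : ∀ γ x, (∑ a, pa γ x a) = 1
  pb_nonneg : ∀ γ y b, 0 ≤ pb γ y b
  pb_sum : ∀ γ y, (∑ b, pb γ y b) = 1
  lower : ∀ γ x y, l ≤ pxy γ x y
  upper : ∀ γ x y, pxy γ x y ≤ h
  repr : ∀ a b x y, P a b x y = ∫ γ, pxy γ x y * pa γ x a * pb γ y b ∂g

/-- Membership in the measurement-dependent local set `MDL(l,h)`. -/
def MemMDL {X Y A B : Type} [Fintype X] [Fintype Y] [Fintype A] [Fintype B]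
    (l h : ℝ) (P : A → B → X → Y → ℝ) : Prop :=
  Nonempty (MDLWitness X Y A B l h P)

/-- Witness that a behavior lies in the one-sided average
measurement-dependent local set `AMDL(κ)`. -/
structure AMDLWitness (X Y A B : Type) [Fintype X] [Fintype Y] [Fintype A] [Fintype B]
    [Nonempty X] (κ : ℝ) (P : A → B → X → Y → ℝ) where
  HV : Type
  [mHV : MeasurableSpace HV]
  g : MeasureTheory.Measure HV
  prob : MeasureTheory.IsProbabilityMeasure g
  px : HV → X → ℝ
  pa : HV → X → A → ℝ
  pb : HV → Y → B → ℝ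
  meas_px : ∀ x, Measurable fun γ => px γ x
  meas_pa : ∀ x a, Measurable fun γ => pa γ x a
  meas_pb : ∀ y b, Measurable fun γ => pb γ y b
  px_nonneg : ∀ γ x, 0 ≤ px γ x
  px_sum : ∀ γ, (∑ x, px γ x) = 1
  pa_nonneg : ∀ γ x a, 0 ≤ pa γ x a
  pa_sum : ∀ γ x, (∑ a, pa γ x a) = 1
  pb_nonneg : ∀ γ y b, 0 ≤ pb γ y b
  pb_sum : ∀ γ y, (∑ b, pb γ y b) = 1
  repr : ∀ a b x y, P a b x y =
    ∫ γ, px γ x * (1 / (Fintype.card Y : ℝ)) * pa γ x a * pb γ y b ∂g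
  leak : (∫ γ, ((Finset.univ.sup' Finset.univ_nonempty fun x => px γ x)
      - 1 / (Fintype.card X : ℝ)) ∂g) ≤ κ

/-- Membership in the one-sided average measurement-dependent local set `AMDL(κ)`. -/
def MemAMDL {X Y A B : Type} [Fintype X] [Fintype Y] [Fintype A] [Fintype B]
    [Nonempty X] (κ : ℝ) (P : A → B → X → Y → ℝ) : Prop :=
  Nonempty (AMDLWitness X Y A B κ P)

/-- Total variation distance between two behaviors. -/
noncomputable def tvDist {X Y A B : Type} [Fintype X] [Fintype Y] [Fintype A] [Fintype B]
    (P Q : A → B → X → Y → ℝ) : ℝ :=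
  (1 / 2) * ∑ a, ∑ b, ∑ x, ∑ y, |P a b x y - Q a b x y|

/-- Affine functional on behaviors: `I(P) = I₀ + ∑ v_{abxy} P(a,b,x,y)`. -/
def affFun {X Y A B : Type} [Fintype X] [Fintype Y] [Fintype A] [Fintype B]
    (I₀ : ℝ) (v : A → B → X → Y → ℝ) (P : A → B → X → Y → ℝ) : ℝ :=
  I₀ + ∑ a, ∑ b, ∑ x, ∑ y, v a b x y * P a b x y

open MeasureTheory

/-! ### Measurement-dependent local models define behaviors -/

/-- The integrands defining a measurement-dependent local behavior take values in `[0,1]`, hence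
are integrable. -/
lemma MDLWitness.integrable {X Y A B : Type} [Fintype X] [Fintype Y] [Fintype A] [Fintype B]
    {l h : ℝ} {P : A → B → X → Y → ℝ} (w : MDLWitness X Y A B l h P) (a : A) (b : B) (x : X)
    (y : Y) : @Integrable _ _ _ _ w.mHV (fun γ => w.pxy γ x y * w.pa γ x a * w.pb γ y b) w.g := by
  let := w.mHV
  have := w.prob
  refine Integrable.of_bound
    (((w.meas_pxy x y).mul (w.meas_pa x a)).mul (w.meas_pb y b)).aestronglyMeasurable 1
    (Filter.Eventually.of_forall fun γ => ?_)
  have h1 : w.pxy γ x y ≤ 1 := by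
    rw [← w.pxy_sum γ]
    exact (Finset.single_le_sum (f := fun y => w.pxy γ x y) (fun i _ => w.pxy_nonneg γ x i)
      (Finset.mem_univ y)).trans
      (Finset.single_le_sum (f := fun x => ∑ y, w.pxy γ x y)
        (fun i _ => Finset.sum_nonneg fun j _ => w.pxy_nonneg γ i j) (Finset.mem_univ x))
  have h2 : w.pa γ x a ≤ 1 := by
    rw [← w.pa_sum γ x]
    exact Finset.single_le_sum (f := fun a => w.pa γ x a) (fun i _ => w.pa_nonneg γ x i)
      (Finset.mem_univ a)
  have h3 : w.pb γ y b ≤ 1 := by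
    rw [← w.pb_sum γ y]
    exact Finset.single_le_sum (f := fun b => w.pb γ y b) (fun i _ => w.pb_nonneg γ y i)
      (Finset.mem_univ b)
  have h12 := mul_nonneg (w.pxy_nonneg γ x y) (w.pa_nonneg γ x a)
  rw [Real.norm_of_nonneg (mul_nonneg h12 (w.pb_nonneg γ y b))]
  exact mul_le_one₀ (mul_le_one₀ h1 (w.pa_nonneg γ x a) h2) (w.pb_nonneg γ y b) h3

lemma MDLWitness.isBehavior {X Y A B : Type} [Fintype X] [Fintype Y] [Fintype A] [Fintype B]
    {l h : ℝ} {P : A → B → X → Y → ℝ} (w : MDLWitness X Y A B l h P) : IsBehavior P := by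
  let := w.mHV
  have := w.prob
  refine ⟨fun a b x y => ?_, ?_⟩
  · rw [w.repr]
    exact integral_nonneg fun γ =>
      mul_nonneg (mul_nonneg (w.pxy_nonneg γ x y) (w.pa_nonneg γ x a)) (w.pb_nonneg γ y b)
  · have hi := w.integrable
    have hsum : ∀ γ, ∑ a, ∑ b, ∑ x, ∑ y, w.pxy γ x y * w.pa γ x a * w.pb γ y b = 1 := by
      intro γ
      calc _ = ∑ a, ∑ x, ∑ y, ∑ b, w.pxy γ x y * w.pa γ x a * w.pb γ y b := by
            refine Finset.sum_congr rfl fun a _ => ?_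
            rw [Finset.sum_comm]
            exact Finset.sum_congr rfl fun x _ => Finset.sum_comm
        _ = ∑ a, ∑ x, ∑ y, w.pxy γ x y * w.pa γ x a := by
            simp only [← Finset.mul_sum, w.pb_sum, mul_one]
        _ = ∑ x, ∑ y, ∑ a, w.pxy γ x y * w.pa γ x a := by
            rw [Finset.sum_comm]
            exact Finset.sum_congr rfl fun x _ => Finset.sum_comm
        _ = 1 := by simp only [← Finset.mul_sum, w.pa_sum, mul_one, w.pxy_sum]
    calc ∑ a, ∑ b, ∑ x, ∑ y, P a b x y
        = ∫ γ, ∑ a, ∑ b, ∑ x, ∑ y, w.pxy γ x y * w.pa γ x a * w.pb γ y b ∂w.g := by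
          rw [integral_finsetSum _ fun a _ => integrable_finsetSum _ fun b _ =>
            integrable_finsetSum _ fun x _ => integrable_finsetSum _ fun y _ => hi a b x y]
          refine Finset.sum_congr rfl fun a _ => ?_
          rw [integral_finsetSum _ fun b _ =>
            integrable_finsetSum _ fun x _ => integrable_finsetSum _ fun y _ => hi a b x y]
          refine Finset.sum_congr rfl fun b _ => ?_
          rw [integral_finsetSum _ fun x _ => integrable_finsetSum _ fun y _ => hi a b x y]
          refine Finset.sum_congr rfl fun x _ => ?_
          rw [integral_finsetSum _ fun y _ => hi a b x y]
          exact Finset.sum_congr rfl fun y _ => w.repr a b x y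
      _ = 1 := by simp [hsum]

/-- Forgetting the bound on the average leakage, an `AMDL` behavior is measurement-dependent local
with the trivial bounds `0` and `1`. -/
noncomputable def AMDLWitness.toMDL {X Y A B : Type} [Fintype X] [Fintype Y] [Fintype A]
    [Fintype B] [Nonempty X] [Nonempty Y] {κ : ℝ} {P : A → B → X → Y → ℝ}
    (w : AMDLWitness X Y A B κ P) : MDLWitness X Y A B 0 1 P :=
  have hY : (1 : ℝ) ≤ Fintype.card Y := by exact_mod_cast Fintype.card_pos (α := Y)
  { HV := w.HV
    mHV := w.mHV
    g := w.g
    prob := w.prob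
    pxy := fun γ x _ => w.px γ x * (1 / (Fintype.card Y : ℝ))
    pa := w.pa
    pb := w.pb
    meas_pxy := fun x _ => by
      let := w.mHV
      exact (w.meas_px x).mul_const _
    meas_pa := w.meas_pa
    meas_pb := w.meas_pb
    pxy_nonneg := fun γ x _ => mul_nonneg (w.px_nonneg γ x) (by positivity)
    pxy_sum := fun γ => by
      have : (Fintype.card Y : ℝ) ≠ 0 := by positivity
      simp only [Finset.sum_const, Finset.card_univ, nsmul_eq_mul]
      rw [← Finset.mul_sum, ← Finset.sum_mul, w.px_sum]
      field_simp
    pa_nonneg := w.pa_nonneg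
    pa_sum := w.pa_sum
    pb_nonneg := w.pb_nonneg
    pb_sum := w.pb_sum
    lower := fun γ x _ => mul_nonneg (w.px_nonneg γ x) (by positivity)
    upper := fun γ x _ => by
      have h1 : w.px γ x ≤ 1 := by
        rw [← w.px_sum γ]
        exact Finset.single_le_sum (f := fun x => w.px γ x) (fun i _ => w.px_nonneg γ i)
          (Finset.mem_univ x)
      exact mul_le_one₀ h1 (by positivity) (by rw [div_le_one (by positivity)]; exact hY)
    repr := w.repr }

/-! ### Conditioning on the good hidden values -/

/-- If no entry of a probability vector exceeds `c`, then every entry is at least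
`1 - (|𝒳| - 1) c`. -/
lemma one_sub_card_mul_le {X : Type} [Fintype X] {p : X → ℝ} {c : ℝ} (hs : ∑ x, p x = 1)
    (hc : ∀ x, p x ≤ c) (x : X) : 1 - ((Fintype.card X : ℝ) - 1) * c ≤ p x := by
  classical
  have h1 := Finset.add_sum_erase Finset.univ p (Finset.mem_univ x)
  have h2 : ∑ z ∈ Finset.univ.erase x, p z ≤ ∑ z ∈ Finset.univ.erase x, c :=
    Finset.sum_le_sum fun z _ => hc z
  rw [Finset.sum_const, nsmul_eq_mul, Finset.card_erase_of_mem (Finset.mem_univ x),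
    Finset.card_univ, Nat.cast_pred (Fintype.card_pos_iff.2 ⟨x⟩)] at h2
  linarith

/-- The good hidden values: those at which no setting `x` is likelier than `c`. -/
def AMDLWitness.good {X Y A B : Type} [Fintype X] [Fintype Y] [Fintype A] [Fintype B]
    [Nonempty X] {κ : ℝ} {P : A → B → X → Y → ℝ} (w : AMDLWitness X Y A B κ P) (c : ℝ) :
    Set w.HV :=
  {γ | ∀ x, w.px γ x ≤ c}

lemma AMDLWitness.measurableSet_good {X Y A B : Type} [Fintype X] [Fintype Y] [Fintype A]
    [Fintype B] [Nonempty X] {κ : ℝ} {P : A → B → X → Y → ℝ} (w : AMDLWitness X Y A B κ P)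
    (c : ℝ) : @MeasurableSet _ w.mHV (w.good c) := by
  let := w.mHV
  have : w.good c = ⋂ x, {γ | w.px γ x ≤ c} := by
    ext γ; simp [AMDLWitness.good]
  rw [this]
  exact MeasurableSet.iInter fun x => measurableSet_le (w.meas_px x) measurable_const

/-- Markov's inequality for the leakage `max_x P(x|γ) - 1/|𝒳|`. -/
lemma AMDLWitness.le_measureReal_good {X Y A B : Type} [Fintype X] [Fintype Y] [Fintype A]
    [Fintype B] [Nonempty X] {κ ϑ : ℝ} (hκ : 0 ≤ κ) (hϑ : 0 < ϑ) {P : A → B → X → Y → ℝ}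
    (w : AMDLWitness X Y A B κ P) :
    1 - κ / (κ + ϑ) ≤
      @Measure.real _ w.mHV w.g (w.good (1 / (Fintype.card X : ℝ) + κ + ϑ)) := by
  let := w.mHV
  have := w.prob
  have hX : (0 : ℝ) < Fintype.card X := by exact_mod_cast Fintype.card_pos (α := X)
  set c := 1 / (Fintype.card X : ℝ) + κ + ϑ with hc
  let f : w.HV → ℝ := fun γ =>
    (Finset.univ.sup' Finset.univ_nonempty fun x => w.px γ x) - 1 / (Fintype.card X : ℝ)
  have hle : ∀ γ x, w.px γ x ≤ f γ + 1 / (Fintype.card X : ℝ) := fun γ x => by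
    have := Finset.le_sup' (fun x => w.px γ x) (Finset.mem_univ x)
    simp only [f]; linarith
  have hf0 : ∀ γ, 0 ≤ f γ := fun γ => by
    have h1 : ∑ x, w.px γ x ≤ ∑ _x : X, (f γ + 1 / (Fintype.card X : ℝ)) :=
      Finset.sum_le_sum fun x _ => hle γ x
    rw [w.px_sum, Finset.sum_const, nsmul_eq_mul, Finset.card_univ, mul_add,
      mul_one_div_cancel hX.ne'] at h1
    exact nonneg_of_mul_nonneg_right (by linarith) hX
  have hf1 : ∀ γ, f γ ≤ 1 := fun γ => by
    have h1 : (Finset.univ.sup' Finset.univ_nonempty fun x => w.px γ x) ≤ 1 :=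
      Finset.sup'_le _ _ fun x _ => by
        rw [← w.px_sum γ]
        exact Finset.single_le_sum (f := fun x => w.px γ x) (fun i _ => w.px_nonneg γ i)
          (Finset.mem_univ x)
    have : (0 : ℝ) ≤ 1 / Fintype.card X := by positivity
    simp only [f]; linarith
  have hfm : Measurable f := by
    refine Measurable.sub_const ?_ _
    have := Finset.measurable_sup' (s := (Finset.univ : Finset X)) Finset.univ_nonempty
      (f := fun x γ => w.px γ x) fun x _ => w.meas_px x
    convert this using 2 with γ
    simp [Finset.sup'_apply]
  have hfi : Integrable f w.g := Integrable.of_bound hfm.aestronglyMeasurable 1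
    (Filter.Eventually.of_forall fun γ => by rw [Real.norm_of_nonneg (hf0 γ)]; exact hf1 γ)
  have hmarkov := mul_meas_ge_le_integral_of_nonneg (Filter.Eventually.of_forall hf0) hfi (κ + ϑ)
  have hsub : (w.good c)ᶜ ⊆ {γ | κ + ϑ ≤ f γ} := fun γ hγ => by
    simp only [AMDLWitness.good, Set.mem_compl_iff, Set.mem_ofPred_eq, not_forall, not_le] at hγ
    obtain ⟨x, hx⟩ := hγ
    have := hle γ x
    simp only [Set.mem_ofPred_eq]; linarith
  have hmono : w.g.real (w.good c)ᶜ ≤ w.g.real {γ | κ + ϑ ≤ f γ} := measureReal_mono hsub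
  rw [probReal_compl_eq_one_sub (w.measurableSet_good c)] at hmono
  have hleak : ∫ γ, f γ ∂w.g ≤ κ := w.leak
  have : w.g.real {γ | κ + ϑ ≤ f γ} ≤ κ / (κ + ϑ) := by
    rw [le_div_iff₀ (by linarith), mul_comm]
    exact hmarkov.trans hleak
  linarith

open Classical in
/-- The measurement-dependent local model obtained by conditioning on the good hidden values. Off
the good set, which is null for the conditioned measure, the settings are made uniform so that the
bounds hold at every `γ`. -/
noncomputable def AMDLWitness.condGood {X Y A B : Type} [Fintype X] [Fintype Y] [Fintype A]
    [Fintype B] [Nonempty X] [Nonempty Y] {κ : ℝ} {P : A → B → X → Y → ℝ}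
    (w : AMDLWitness X Y A B κ P) (c : ℝ) (hc : 1 / (Fintype.card X : ℝ) ≤ c)
    (hG : w.g (w.good c) ≠ 0) :
    MDLWitness X Y A B ((1 / (Fintype.card Y : ℝ)) * (1 - ((Fintype.card X : ℝ) - 1) * c))
      ((1 / (Fintype.card Y : ℝ)) * c)
      (fun a b x y => (@Measure.real _ w.mHV w.g (w.good c))⁻¹ *
        @integral _ _ _ _ w.mHV (@Measure.restrict _ w.mHV w.g (w.good c))
          fun γ => w.px γ x * (1 / (Fintype.card Y : ℝ)) * w.pa γ x a * w.pb γ y b) :=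
  letI := w.mHV
  haveI := w.prob
  let q : w.HV → X → ℝ := fun γ x => if γ ∈ w.good c then w.px γ x else 1 / (Fintype.card X : ℝ)
  have hY : (0 : ℝ) < Fintype.card Y := by exact_mod_cast Fintype.card_pos (α := Y)
  have hX : (0 : ℝ) < Fintype.card X := by exact_mod_cast Fintype.card_pos (α := X)
  have hq0 : ∀ γ x, 0 ≤ q γ x := fun γ x => by
    simp only [q]; split_ifs
    · exact w.px_nonneg γ x
    · positivity
  have hqs : ∀ γ, ∑ x, q γ x = 1 := fun γ => by
    simp only [q]; split_ifs
    · exact w.px_sum γ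
    · simp [hX.ne']
  have hqc : ∀ γ x, q γ x ≤ c := fun γ x => by
    simp only [q]; split_ifs with h
    · exact h x
    · exact hc
  { HV := w.HV
    mHV := w.mHV
    g := ProbabilityTheory.cond w.g (w.good c)
    prob := ProbabilityTheory.cond_isProbabilityMeasure hG
    pxy := fun γ x _ => (1 / (Fintype.card Y : ℝ)) * q γ x
    pa := w.pa
    pb := w.pb
    meas_pxy := fun x _ =>
      (Measurable.ite (w.measurableSet_good c) (w.meas_px x) measurable_const).const_mul _
    meas_pa := w.meas_pa
    meas_pb := w.meas_pb
    pxy_nonneg := fun γ x _ => mul_nonneg (by positivity) (hq0 γ x)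
    pxy_sum := fun γ => by
      simp only [Finset.sum_const, Finset.card_univ, nsmul_eq_mul]
      rw [← Finset.mul_sum, ← Finset.mul_sum, hqs]
      field_simp
    pa_nonneg := w.pa_nonneg
    pa_sum := w.pa_sum
    pb_nonneg := w.pb_nonneg
    pb_sum := w.pb_sum
    lower := fun γ x _ =>
      mul_le_mul_of_nonneg_left (one_sub_card_mul_le (hqs γ) (hqc γ) x) (by positivity)
    upper := fun γ x _ => mul_le_mul_of_nonneg_left (hqc γ x) (by positivity)
    repr := fun a b x y => by
      rw [ProbabilityTheory.cond, integral_smul_measure, ENNReal.toReal_inv, smul_eq_mul]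
      congr 1
      refine setIntegral_congr_fun (w.measurableSet_good c) fun γ hγ => ?_
      simp only [q, if_pos hγ]
      ring }

/-! ### Splitting off a dominated behavior -/

/-- A behavior `P` that dominates `(1 - β) L` pointwise splits off `L` with weight `1 - β`. For
`β = 0` the two distributions coincide, having equal total mass. -/
lemma exists_behavior_of_le {X Y A B : Type} [Fintype X] [Fintype Y] [Fintype A] [Fintype B]
    {P L : A → B → X → Y → ℝ} {β : ℝ} (hβ : 0 ≤ β) (hP : IsBehavior P) (hL : IsBehavior L)
    (hle : ∀ a b x y, (1 - β) * L a b x y ≤ P a b x y) :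
    ∃ S, IsBehavior S ∧ ∀ a b x y, P a b x y = (1 - β) * L a b x y + β * S a b x y := by
  have hsum : ∑ a, ∑ b, ∑ x, ∑ y, (P a b x y - (1 - β) * L a b x y) = β := by
    simp only [Finset.sum_sub_distrib, ← Finset.mul_sum, hP.2, hL.2]
    ring
  rcases hβ.eq_or_lt with rfl | hβ
  · have h0 : ∀ a b x y, 0 ≤ P a b x y - (1 - 0) * L a b x y := fun a b x y =>
      sub_nonneg.2 (hle a b x y)
    refine ⟨L, hL, fun a b x y => ?_⟩
    have h1 := (Finset.sum_eq_zero_iff_of_nonneg fun a _ => Finset.sum_nonneg fun b _ =>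
      Finset.sum_nonneg fun x _ => Finset.sum_nonneg fun y _ => h0 a b x y).1 hsum a
        (Finset.mem_univ a)
    have h2 := (Finset.sum_eq_zero_iff_of_nonneg fun b _ =>
      Finset.sum_nonneg fun x _ => Finset.sum_nonneg fun y _ => h0 a b x y).1 h1 b
        (Finset.mem_univ b)
    have h3 := (Finset.sum_eq_zero_iff_of_nonneg fun x _ =>
      Finset.sum_nonneg fun y _ => h0 a b x y).1 h2 x (Finset.mem_univ x)
    have h4 := (Finset.sum_eq_zero_iff_of_nonneg fun y _ => h0 a b x y).1 h3 y (Finset.mem_univ y)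
    linarith
  · refine ⟨fun a b x y => β⁻¹ * (P a b x y - (1 - β) * L a b x y), ⟨fun a b x y =>
      mul_nonneg (inv_nonneg.2 hβ.le) (sub_nonneg.2 (hle a b x y)), ?_⟩, fun a b x y => ?_⟩
    · simp only [← Finset.mul_sum, hsum]
      exact inv_mul_cancel₀ hβ.ne'
    · rw [mul_inv_cancel_left₀ hβ.ne']
      ring

/-- one-sided MDL decomposition under AMDL, with explicit `l`. -/
theorem amdl_mdl_decomposition_one_sided
    (X Y A B : Type) [Fintype X] [Fintype Y] [Fintype A] [Fintype B]
    [Nonempty X] [Nonempty Y] [Nonempty A] [Nonempty B]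
    (κ ϑ : ℝ) (hκ : 0 ≤ κ) (hϑ : 0 < ϑ)
    (P : A → B → X → Y → ℝ) (hP : MemAMDL κ P) :
    ∃ L S : A → B → X → Y → ℝ,
      MemMDL
        ((1 / (Fintype.card Y : ℝ)) *
          (1 - ((Fintype.card X : ℝ) - 1) * (1 / (Fintype.card X : ℝ) + κ + ϑ)))
        ((1 / (Fintype.card Y : ℝ)) * (1 / (Fintype.card X : ℝ) + κ + ϑ)) L ∧
      IsBehavior S ∧
      (∀ a b x y, P a b x y =
        (1 - κ / (κ + ϑ)) * L a b x y + (κ / (κ + ϑ)) * S a b x y) := by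
  obtain ⟨w⟩ := hP
  let := w.mHV
  have := w.prob
  have hpos : 0 < κ + ϑ := by linarith
  have hβ1 : 0 < 1 - κ / (κ + ϑ) := by
    rw [sub_pos, div_lt_one hpos]; linarith
  have hmass := w.le_measureReal_good hκ hϑ
  set c := 1 / (Fintype.card X : ℝ) + κ + ϑ with hc
  have hG : w.g (w.good c) ≠ 0 := fun h => by
    rw [Measure.real, h, ENNReal.toReal_zero] at hmass
    linarith
  have wL := w.condGood c (by linarith) hG
  obtain ⟨S, hS, hPS⟩ := exists_behavior_of_le (β := κ / (κ + ϑ)) (div_nonneg hκ hpos.le)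
    w.toMDL.isBehavior wL.isBehavior (by
      intro a b x y
      have h0 : ∀ γ, 0 ≤ w.px γ x * (1 / (Fintype.card Y : ℝ)) * w.pa γ x a * w.pb γ y b :=
        fun γ => mul_nonneg (mul_nonneg (mul_nonneg (w.px_nonneg γ x) (by positivity))
          (w.pa_nonneg γ x a)) (w.pb_nonneg γ y b)
      rw [w.repr a b x y, ← mul_assoc]
      refine (mul_le_of_le_one_left (integral_nonneg h0) ?_).trans
        (setIntegral_le_integral (w.toMDL.integrable a b x y) (Filter.Eventually.of_forall h0))
      rw [← div_eq_mul_inv]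
      exact div_le_one_of_le₀ hmass measureReal_nonneg)
  exact ⟨_, S, ⟨wL⟩, hS, hPS⟩
end

section
/- Let 𝒳, 𝒴, 𝒜, ℬ be finite nonempty sets, let κ ≥ 0 and ϑ > 0, and set h_ϑ := (1/|𝒴|)·(1/|𝒳| + κ + ϑ) and l_ϑ := (1/|𝒴|)·(1 − (|𝒳|−1)·(1/|𝒳| + κ + ϑ)). Let I be an affine functional on behaviors, I(P) = I₀ + Σ_{a,b,x,y} v_{abxy}·P(a,b,x,y), such that I(L) ≤ 0 for every L ∈ MDL(l_ϑ, h_ϑ). Then for every P ∈ AMDL(κ), I(P) ≤ (κ/(κ+ϑ)) · max_{S} I(S), where the maximum is over all probability distributions S on 𝒜×ℬ×𝒳×𝒴. -/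
/-- The affine functional is bounded above on behaviors, so that the supremum in the theorem is a
genuine one. -/
lemma bddAbove_affFun {X Y A B : Type} [Fintype X] [Fintype Y] [Fintype A] [Fintype B]
    (I₀ : ℝ) (v : A → B → X → Y → ℝ) :
    BddAbove {r : ℝ | ∃ S : A → B → X → Y → ℝ, IsBehavior S ∧ r = affFun I₀ v S} := by
  obtain ⟨C, hC⟩ := (Set.finite_range
    (fun t : A × B × X × Y => v t.1 t.2.1 t.2.2.1 t.2.2.2)).bddAbove
  have hv : ∀ a b x y, v a b x y ≤ C := fun a b x y => hC ⟨(a, b, x, y), rfl⟩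
  refine ⟨I₀ + C, ?_⟩
  rintro r ⟨S, ⟨hS0, hS1⟩, rfl⟩
  unfold affFun
  have h : ∑ a, ∑ b, ∑ x, ∑ y, v a b x y * S a b x y
      ≤ ∑ a, ∑ b, ∑ x, ∑ y, C * S a b x y := by
    refine Finset.sum_le_sum fun a _ => Finset.sum_le_sum fun b _ =>
      Finset.sum_le_sum fun x _ => Finset.sum_le_sum fun y _ => ?_
    exact mul_le_mul_of_nonneg_right (hv a b x y) (hS0 a b x y)
  simp only [← Finset.mul_sum] at h
  rw [hS1] at h
  linarith

/-- The behavior produced by a one-sided model at one fixed value of the hidden variable. -/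
noncomputable def slice {X Y A B : Type} [Fintype Y]
    (p : X → ℝ) (pa : X → A → ℝ) (pb : Y → B → ℝ) : A → B → X → Y → ℝ :=
  fun a b x y => p x * (1 / (Fintype.card Y : ℝ)) * pa x a * pb y b

lemma isBehavior_slice {X Y A B : Type} [Fintype X] [Fintype Y] [Fintype A] [Fintype B]
    [Nonempty Y] {p : X → ℝ} {pa : X → A → ℝ} {pb : Y → B → ℝ}
    (hp : ∀ x, 0 ≤ p x) (hp1 : ∑ x, p x = 1)
    (ha : ∀ x a, 0 ≤ pa x a) (ha1 : ∀ x, ∑ a, pa x a = 1)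
    (hb : ∀ y b, 0 ≤ pb y b) (hb1 : ∀ y, ∑ b, pb y b = 1) :
    IsBehavior (slice p pa pb) := by
  refine ⟨fun a b x y => ?_, ?_⟩
  · have := hp x
    have := ha x a
    have := hb y b
    unfold slice
    positivity
  · unfold slice
    -- Summing over `b` and then `y` removes `pb` together with the factor `1 / |𝒴|`.
    have hAB : ∀ a, ∑ b, ∑ x, ∑ y, p x * (1 / (Fintype.card Y : ℝ)) * pa x a * pb y b
        = ∑ x, p x * pa x a := by
      intro a
      rw [Finset.sum_comm]
      refine Finset.sum_congr rfl fun x _ => ?_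
      rw [Finset.sum_comm]
      simp only [← Finset.mul_sum, hb1]
      have : (Fintype.card Y : ℝ) ≠ 0 := by simp
      simp
      field_simp
    simp only [hAB]
    rw [Finset.sum_comm]
    simp only [← Finset.mul_sum, ha1, mul_one, hp1]

/-- A slice whose input distribution is bounded by `c` lies in the measurement-dependent local set
with upper bound `c / |𝒴|`; the hidden variable is a single point. The lower bound is forced by
normalization. -/
lemma memMDL_slice {X Y A B : Type} [Fintype X] [Fintype Y] [Fintype A] [Fintype B]
    [Nonempty Y] {p : X → ℝ} {pa : X → A → ℝ} {pb : Y → B → ℝ} {c : ℝ}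
    (hp : ∀ x, 0 ≤ p x) (hp1 : ∑ x, p x = 1)
    (ha : ∀ x a, 0 ≤ pa x a) (ha1 : ∀ x, ∑ a, pa x a = 1)
    (hb : ∀ y b, 0 ≤ pb y b) (hb1 : ∀ y, ∑ b, pb y b = 1) (hc : ∀ x, p x ≤ c) :
    MemMDL ((1 / (Fintype.card Y : ℝ)) * (1 - ((Fintype.card X : ℝ) - 1) * c))
      ((1 / (Fintype.card Y : ℝ)) * c) (slice p pa pb) := by
  classical
  have hY : (Fintype.card Y : ℝ) ≠ 0 := by simp
  have hlow : ∀ x, 1 - ((Fintype.card X : ℝ) - 1) * c ≤ p x := by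
    intro x
    have h1 : ∑ z ∈ Finset.univ.erase x, p z ≤ (Finset.univ.erase x).card • c :=
      Finset.sum_le_card_nsmul _ _ _ fun z _ => hc z
    have h2 := Finset.add_sum_erase Finset.univ p (Finset.mem_univ x)
    have : 1 ≤ Fintype.card X := Fintype.card_pos_iff.mpr ⟨x⟩
    rw [Finset.card_erase_of_mem (Finset.mem_univ x), Finset.card_univ, nsmul_eq_mul,
      Nat.cast_sub this, Nat.cast_one] at h1
    linarith
  refine ⟨{
    HV := Unit
    g := MeasureTheory.Measure.dirac ()
    prob := inferInstance
    pxy := fun _ x _ => p x * (1 / (Fintype.card Y : ℝ))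
    pa := fun _ => pa
    pb := fun _ => pb
    meas_pxy := fun _ _ => measurable_const
    meas_pa := fun _ _ => measurable_const
    meas_pb := fun _ _ => measurable_const
    pxy_nonneg := fun _ x _ => mul_nonneg (hp x) (by positivity)
    pxy_sum := fun _ => ?_
    pa_nonneg := fun _ => ha
    pa_sum := fun _ => ha1
    pb_nonneg := fun _ => hb
    pb_sum := fun _ => hb1
    lower := fun _ x _ => ?_
    upper := fun _ x _ => ?_
    repr := fun a b x y => ?_ }⟩
  · refine (Finset.sum_congr rfl fun x _ => ?_).trans hp1
    simp
    field_simp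
  · rw [mul_comm (p x)]
    exact mul_le_mul_of_nonneg_left (hlow x) (by positivity)
  · rw [mul_comm (p x)]
    exact mul_le_mul_of_nonneg_left (hc x) (by positivity)
  · simp [slice]

/-- The affine functional commutes with averaging over the hidden variable. -/
lemma affFun_eq_integral {X Y A B HV : Type} [Fintype X] [Fintype Y] [Fintype A] [Fintype B]
    [MeasurableSpace HV] (g : MeasureTheory.Measure HV) [MeasureTheory.IsProbabilityMeasure g]
    (I₀ : ℝ) (v P : A → B → X → Y → ℝ) (Q : HV → A → B → X → Y → ℝ)
    (hQ : ∀ a b x y, MeasureTheory.Integrable (fun γ => Q γ a b x y) g)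
    (hP : ∀ a b x y, P a b x y = ∫ γ, Q γ a b x y ∂g) :
    MeasureTheory.Integrable (fun γ => affFun I₀ v (Q γ)) g ∧
      affFun I₀ v P = ∫ γ, affFun I₀ v (Q γ) ∂g := by
  have h4 : ∀ a b x y, MeasureTheory.Integrable (fun γ => v a b x y * Q γ a b x y) g :=
    fun a b x y => (hQ a b x y).const_mul _
  have h3 : ∀ a b x, MeasureTheory.Integrable (fun γ => ∑ y, v a b x y * Q γ a b x y) g :=
    fun a b x => MeasureTheory.integrable_finsetSum _ fun y _ => h4 a b x y
  have h2 : ∀ a b, MeasureTheory.Integrable (fun γ => ∑ x, ∑ y, v a b x y * Q γ a b x y) g :=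
    fun a b => MeasureTheory.integrable_finsetSum _ fun x _ => h3 a b x
  have h1 : ∀ a, MeasureTheory.Integrable
      (fun γ => ∑ b, ∑ x, ∑ y, v a b x y * Q γ a b x y) g :=
    fun a => MeasureTheory.integrable_finsetSum _ fun b _ => h2 a b
  have h0 : MeasureTheory.Integrable
      (fun γ => ∑ a, ∑ b, ∑ x, ∑ y, v a b x y * Q γ a b x y) g :=
    MeasureTheory.integrable_finsetSum _ fun a _ => h1 a
  refine ⟨(MeasureTheory.integrable_const I₀).add h0, ?_⟩
  unfold affFun
  rw [MeasureTheory.integral_add (MeasureTheory.integrable_const I₀) h0,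
    MeasureTheory.integral_const, MeasureTheory.probReal_univ, one_smul,
    MeasureTheory.integral_finsetSum _ fun a _ => h1 a]
  congr 1
  refine Finset.sum_congr rfl fun a _ => ?_
  rw [MeasureTheory.integral_finsetSum _ fun b _ => h2 a b]
  refine Finset.sum_congr rfl fun b _ => ?_
  rw [MeasureTheory.integral_finsetSum _ fun x _ => h3 a b x]
  refine Finset.sum_congr rfl fun x _ => ?_
  rw [MeasureTheory.integral_finsetSum _ fun y _ => h4 a b x y]
  refine Finset.sum_congr rfl fun y _ => ?_
  rw [MeasureTheory.integral_const_mul, hP]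

/-- bounding AMDL distributions by MDL inequalities. -/
theorem amdl_mdl_inequality_bound
    (X Y A B : Type) [Fintype X] [Fintype Y] [Fintype A] [Fintype B]
    [Nonempty X] [Nonempty Y] [Nonempty A] [Nonempty B]
    (κ ϑ : ℝ) (hκ : 0 ≤ κ) (hϑ : 0 < ϑ)
    (I₀ : ℝ) (v : A → B → X → Y → ℝ)
    (hI : ∀ L : A → B → X → Y → ℝ,
      MemMDL
        ((1 / (Fintype.card Y : ℝ)) *
          (1 - ((Fintype.card X : ℝ) - 1) * (1 / (Fintype.card X : ℝ) + κ + ϑ)))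
        ((1 / (Fintype.card Y : ℝ)) * (1 / (Fintype.card X : ℝ) + κ + ϑ)) L →
      affFun I₀ v L ≤ 0)
    (P : A → B → X → Y → ℝ) (hP : MemAMDL κ P) :
    affFun I₀ v P ≤ (κ / (κ + ϑ)) *
      sSup {r : ℝ | ∃ S : A → B → X → Y → ℝ, IsBehavior S ∧ r = affFun I₀ v S} := by
  obtain ⟨W⟩ := hP
  obtain ⟨HV, g, prob, px, pa, pb, mpx, mpa, mpb, px0, px1, pa0, pa1, pb0, pb1, hrepr, leak⟩ := W
  set M := sSup {r : ℝ | ∃ S : A → B → X → Y → ℝ, IsBehavior S ∧ r = affFun I₀ v S} with hM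
  let f : HV → ℝ := fun γ => (Finset.univ.sup' Finset.univ_nonempty fun x => px γ x)
      - 1 / (Fintype.card X : ℝ)
  have hX : (0 : ℝ) < Fintype.card X := by exact_mod_cast Fintype.card_pos
  have hpx_le : ∀ γ x, px γ x ≤ f γ + 1 / (Fintype.card X : ℝ) := by
    intro γ x
    have := Finset.le_sup' (fun x => px γ x) (Finset.mem_univ x)
    simp only [f]
    linarith
  have hpx_one : ∀ γ x, px γ x ≤ 1 := fun γ x => by
    rw [← px1 γ]
    exact Finset.single_le_sum (fun z _ => px0 γ z) (Finset.mem_univ x)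
  have hbeh : ∀ γ, IsBehavior (slice (px γ) (pa γ) (pb γ)) := fun γ =>
    isBehavior_slice (px0 γ) (px1 γ) (pa0 γ) (pa1 γ) (pb0 γ) (pb1 γ)
  have hleM : ∀ γ, affFun I₀ v (slice (px γ) (pa γ) (pb γ)) ≤ M := fun γ =>
    le_csSup (bddAbove_affFun I₀ v) ⟨_, hbeh γ, rfl⟩
  have hQint : ∀ a b x y,
      MeasureTheory.Integrable (fun γ => slice (px γ) (pa γ) (pb γ) a b x y) g := by
    intro a b x y
    refine MeasureTheory.Integrable.of_bound (C := 1) ?_ (Filter.Eventually.of_forall fun γ => ?_)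
    · unfold slice
      exact ((((mpx x).mul_const _).mul (mpa x a)).mul (mpb y b)).aestronglyMeasurable
    · obtain ⟨h0, h1⟩ := hbeh γ
      rw [Real.norm_of_nonneg (h0 a b x y), ← h1]
      calc slice (px γ) (pa γ) (pb γ) a b x y
          ≤ ∑ y, slice (px γ) (pa γ) (pb γ) a b x y :=
            Finset.single_le_sum (f := fun y => slice (px γ) (pa γ) (pb γ) a b x y)
              (fun y _ => h0 a b x y) (Finset.mem_univ y)
        _ ≤ ∑ x, ∑ y, slice (px γ) (pa γ) (pb γ) a b x y :=
            Finset.single_le_sum (f := fun x => ∑ y, slice (px γ) (pa γ) (pb γ) a b x y)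
              (fun x _ => Finset.sum_nonneg fun y _ => h0 a b x y) (Finset.mem_univ x)
        _ ≤ ∑ b, ∑ x, ∑ y, slice (px γ) (pa γ) (pb γ) a b x y :=
            Finset.single_le_sum (f := fun b => ∑ x, ∑ y, slice (px γ) (pa γ) (pb γ) a b x y)
              (fun b _ => Finset.sum_nonneg fun x _ => Finset.sum_nonneg fun y _ => h0 a b x y)
              (Finset.mem_univ b)
        _ ≤ ∑ a, ∑ b, ∑ x, ∑ y, slice (px γ) (pa γ) (pb γ) a b x y :=
            Finset.single_le_sum
              (f := fun a => ∑ b, ∑ x, ∑ y, slice (px γ) (pa γ) (pb γ) a b x y)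
              (fun a _ => Finset.sum_nonneg fun b _ => Finset.sum_nonneg fun x _ =>
                Finset.sum_nonneg fun y _ => h0 a b x y) (Finset.mem_univ a)
  obtain ⟨hFint, hF⟩ := affFun_eq_integral g I₀ v P
    (fun γ => slice (px γ) (pa γ) (pb γ)) hQint hrepr
  rw [hF]
  have hpos : 0 < κ + ϑ := by linarith
  rcases lt_or_ge M 0 with hneg | hMnn
  · have h1 : ∫ γ, affFun I₀ v (slice (px γ) (pa γ) (pb γ)) ∂g ≤ M := by
      have := MeasureTheory.integral_mono hFint (MeasureTheory.integrable_const M) hleM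
      simpa using this
    have h2 : κ / (κ + ϑ) ≤ 1 := (div_le_one hpos).mpr (by linarith)
    nlinarith
  · have hf0 : ∀ γ, 0 ≤ f γ := by
      intro γ
      -- The weights sum to `1`, so the largest of them is at least their mean `1 / |𝒳|`.
      have h1 : ∑ x, px γ x ≤ ∑ _x : X, (f γ + 1 / (Fintype.card X : ℝ)) :=
        Finset.sum_le_sum fun x _ => hpx_le γ x
      rw [px1, Finset.sum_const, Finset.card_univ, nsmul_eq_mul, mul_add,
        mul_one_div_cancel hX.ne'] at h1
      exact nonneg_of_mul_nonneg_right (by linarith) hX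
    have hfint : MeasureTheory.Integrable f g := by
      refine MeasureTheory.Integrable.of_bound (C := 1) ?_
        (Filter.Eventually.of_forall fun γ => ?_)
      · refine Measurable.aestronglyMeasurable (Measurable.sub_const ?_ _)
        have := Finset.measurable_sup' (s := Finset.univ) Finset.univ_nonempty
          (f := fun x γ => px γ x) fun x _ => mpx x
        convert this using 1
        ext γ
        simp
      · rw [Real.norm_of_nonneg (hf0 γ)]
        have : (Finset.univ.sup' Finset.univ_nonempty fun x => px γ x) ≤ 1 :=
          Finset.sup'_le _ _ fun x _ => hpx_one γ x
        have : 0 ≤ 1 / (Fintype.card X : ℝ) := by positivity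
        simp only [f]
        linarith
    have hpt : ∀ γ, affFun I₀ v (slice (px γ) (pa γ) (pb γ)) ≤ M / (κ + ϑ) * f γ := by
      intro γ
      rcases le_or_gt (f γ) (κ + ϑ) with hgood | hbad
      · refine (hI _ (memMDL_slice (px0 γ) (px1 γ) (pa0 γ) (pa1 γ) (pb0 γ) (pb1 γ)
          fun x => ?_)).trans (mul_nonneg (div_nonneg hMnn hpos.le) (hf0 γ))
        linarith [hpx_le γ x]
      · calc affFun I₀ v (slice (px γ) (pa γ) (pb γ)) ≤ M := hleM γ
          _ = M / (κ + ϑ) * (κ + ϑ) := by field_simp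
          _ ≤ M / (κ + ϑ) * f γ :=
            mul_le_mul_of_nonneg_left hbad.le (div_nonneg hMnn hpos.le)
    calc ∫ γ, affFun I₀ v (slice (px γ) (pa γ) (pb γ)) ∂g
        ≤ ∫ γ, M / (κ + ϑ) * f γ ∂g :=
          MeasureTheory.integral_mono hFint (hfint.const_mul _) hpt
      _ = M / (κ + ϑ) * ∫ γ, f γ ∂g := MeasureTheory.integral_const_mul _ _
      _ ≤ M / (κ + ϑ) * κ := mul_le_mul_of_nonneg_left leak (div_nonneg hMnn hpos.le)
      _ = κ / (κ + ϑ) * M := by ring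
end

section
/- Let 𝒳, 𝒴, 𝒜, ℬ be finite nonempty sets, fix κ ≥ 0 and ε > 0. Then for every behavior P ∈ AMDL(κ + ε) there exists Q ∈ AMDL(κ) with total variation distance δ(P, Q) ≤ ε/(κ + ε). -/
namespace AMDLWitness

attribute [instance] AMDLWitness.mHV AMDLWitness.prob

variable {X Y A B : Type} [Fintype X] [Fintype Y] [Fintype A] [Fintype B] [Nonempty X]
  {κ : ℝ} {P : A → B → X → Y → ℝ}

lemma px_le_one (w : AMDLWitness X Y A B κ P) (γ : w.HV) (x : X) : w.px γ x ≤ 1 := by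
  rw [← w.px_sum γ]
  exact Finset.single_le_sum (fun i _ => w.px_nonneg γ i) (Finset.mem_univ x)

lemma pa_le_one (w : AMDLWitness X Y A B κ P) (γ : w.HV) (x : X) (a : A) : w.pa γ x a ≤ 1 := by
  rw [← w.pa_sum γ x]
  exact Finset.single_le_sum (fun i _ => w.pa_nonneg γ x i) (Finset.mem_univ a)

lemma pb_le_one (w : AMDLWitness X Y A B κ P) (γ : w.HV) (y : Y) (b : B) : w.pb γ y b ≤ 1 := by
  rw [← w.pb_sum γ y]
  exact Finset.single_le_sum (fun i _ => w.pb_nonneg γ y i) (Finset.mem_univ b)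

lemma one_div_card_nonneg (Z : Type) [Fintype Z] : 0 ≤ 1 / (Fintype.card Z : ℝ) := by
  positivity

lemma one_div_card_le_one (Z : Type) [Fintype Z] : 1 / (Fintype.card Z : ℝ) ≤ 1 := by
  rw [one_div]
  exact Nat.cast_inv_le_one _

lemma integrable_integrand (w : AMDLWitness X Y A B κ P) (a : A) (b : B) (x : X) (y : Y) :
    MeasureTheory.Integrable
      (fun γ => w.px γ x * (1 / (Fintype.card Y : ℝ)) * w.pa γ x a * w.pb γ y b) w.g := by
  have h1 := w.meas_px x
  have h2 := w.meas_pa x a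
  have h3 := w.meas_pb y b
  refine MeasureTheory.Integrable.of_bound (C := 1) (by fun_prop) (.of_forall fun γ => ?_)
  have p1 := w.px_nonneg γ x
  have p2 := w.pa_nonneg γ x a
  have p3 := w.pb_nonneg γ y b
  have p4 := one_div_card_nonneg Y
  rw [Real.norm_of_nonneg (by positivity)]
  exact mul_le_one₀ (mul_le_one₀ (mul_le_one₀ (w.px_le_one γ x) p4 (one_div_card_le_one Y)) p2
    (w.pa_le_one γ x a)) p3 (w.pb_le_one γ y b)

lemma nonneg (w : AMDLWitness X Y A B κ P) (a : A) (b : B) (x : X) (y : Y) : 0 ≤ P a b x y := by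
  rw [w.repr]
  refine MeasureTheory.integral_nonneg fun γ => ?_
  have p1 := w.px_nonneg γ x
  have p2 := w.pa_nonneg γ x a
  have p3 := w.pb_nonneg γ y b
  positivity

lemma sum_integrand [Nonempty Y] (w : AMDLWitness X Y A B κ P) (γ : w.HV) :
    ∑ a, ∑ b, ∑ x, ∑ y, w.px γ x * (1 / (Fintype.card Y : ℝ)) * w.pa γ x a * w.pb γ y b = 1 := by
  calc
    _ = ∑ x, ∑ y, ∑ a, ∑ b,
        w.px γ x * (1 / (Fintype.card Y : ℝ)) * w.pa γ x a * w.pb γ y b := by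
      rw [Finset.sum_congr rfl fun a _ =>
        Finset.sum_comm.trans (Finset.sum_congr rfl fun x _ => Finset.sum_comm)]
      exact Finset.sum_comm.trans (Finset.sum_congr rfl fun x _ => Finset.sum_comm)
    _ = 1 := by
      simp_rw [← Finset.mul_sum, w.pb_sum, mul_one, ← Finset.mul_sum, w.pa_sum]
      simp [w.px_sum]

lemma sum_eq_one [Nonempty Y] (w : AMDLWitness X Y A B κ P) :
    ∑ a, ∑ b, ∑ x, ∑ y, P a b x y = 1 := by
  have hI := w.integrable_integrand
  calc
    _ = ∫ γ, ∑ a, ∑ b, ∑ x, ∑ y,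
        w.px γ x * (1 / (Fintype.card Y : ℝ)) * w.pa γ x a * w.pb γ y b ∂w.g := by
      rw [MeasureTheory.integral_finsetSum _ fun a _ => MeasureTheory.integrable_finsetSum _
        fun b _ => MeasureTheory.integrable_finsetSum _ fun x _ =>
          MeasureTheory.integrable_finsetSum _ fun y _ => hI a b x y]
      refine Finset.sum_congr rfl fun a _ => ?_
      rw [MeasureTheory.integral_finsetSum _ fun b _ => MeasureTheory.integrable_finsetSum _
        fun x _ => MeasureTheory.integrable_finsetSum _ fun y _ => hI a b x y]
      refine Finset.sum_congr rfl fun b _ => ?_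
      rw [MeasureTheory.integral_finsetSum _ fun x _ =>
        MeasureTheory.integrable_finsetSum _ fun y _ => hI a b x y]
      refine Finset.sum_congr rfl fun x _ => ?_
      rw [MeasureTheory.integral_finsetSum _ fun y _ => hI a b x y]
      exact Finset.sum_congr rfl fun y _ => w.repr a b x y
    _ = 1 := by
      simp_rw [w.sum_integrand]
      simp

/-- The behavior of the model `w` with inputs drawn uniformly, independently of the hidden
variable. -/
noncomputable def uniformBehavior (w : AMDLWitness X Y A B κ P) (a : A) (b : B) (x : X) (y : Y) :
    ℝ :=
  ∫ γ, (1 / (Fintype.card X : ℝ)) * (1 / (Fintype.card Y : ℝ)) * w.pa γ x a * w.pb γ y b ∂w.g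

lemma integrable_uniform (w : AMDLWitness X Y A B κ P) (a : A) (b : B) (x : X) (y : Y) :
    MeasureTheory.Integrable (fun γ => (1 / (Fintype.card X : ℝ)) * (1 / (Fintype.card Y : ℝ)) *
      w.pa γ x a * w.pb γ y b) w.g := by
  have h2 := w.meas_pa x a
  have h3 := w.meas_pb y b
  refine MeasureTheory.Integrable.of_bound (C := 1) (by fun_prop) (.of_forall fun γ => ?_)
  have p2 := w.pa_nonneg γ x a
  have p3 := w.pb_nonneg γ y b
  rw [Real.norm_of_nonneg (by positivity)]
  exact mul_le_one₀ (mul_le_one₀ (mul_le_one₀ (one_div_card_le_one X) (one_div_card_nonneg Y)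
    (one_div_card_le_one Y)) p2 (w.pa_le_one γ x a)) p3 (w.pb_le_one γ y b)

/-- The model obtained from `w` by mixing each input law with the uniform law, with weights `t`
and `1 - t`. The leak is multiplied by `t`, since the maximum commutes with increasing affine
maps. -/
noncomputable def mix (w : AMDLWitness X Y A B κ P) (t : ℝ) (ht0 : 0 ≤ t) (ht1 : t ≤ 1) :
    AMDLWitness X Y A B (t * κ)
      (fun a b x y => t * P a b x y + (1 - t) * w.uniformBehavior a b x y) where
  HV := w.HV
  g := w.g
  prob := w.prob
  px γ x := t * w.px γ x + (1 - t) * (1 / (Fintype.card X : ℝ))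
  pa := w.pa
  pb := w.pb
  meas_px x := by
    have h1 := w.meas_px x
    fun_prop
  meas_pa := w.meas_pa
  meas_pb := w.meas_pb
  px_nonneg γ x := add_nonneg (mul_nonneg ht0 (w.px_nonneg γ x))
    (mul_nonneg (sub_nonneg.2 ht1) (one_div_card_nonneg X))
  px_sum γ := by
    rw [Finset.sum_add_distrib, ← Finset.mul_sum, w.px_sum, Finset.sum_const, Finset.card_univ,
      nsmul_eq_mul]
    field_simp
    ring
  pa_nonneg := w.pa_nonneg
  pa_sum := w.pa_sum
  pb_nonneg := w.pb_nonneg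
  pb_sum := w.pb_sum
  repr a b x y := by
    rw [w.repr, uniformBehavior, ← MeasureTheory.integral_const_mul,
      ← MeasureTheory.integral_const_mul, ← MeasureTheory.integral_add
        ((w.integrable_integrand a b x y).const_mul _) ((w.integrable_uniform a b x y).const_mul _)]
    congr 1
    ext γ
    ring
  leak := by
    have key (γ : w.HV) :
        (Finset.univ.sup' Finset.univ_nonempty fun x =>
            t * w.px γ x + (1 - t) * (1 / (Fintype.card X : ℝ))) - 1 / (Fintype.card X : ℝ) =
          t * ((Finset.univ.sup' Finset.univ_nonempty fun x => w.px γ x) -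
            1 / (Fintype.card X : ℝ)) := by
      have hmono : Monotone fun r : ℝ => t * r + (1 - t) * (1 / (Fintype.card X : ℝ)) :=
        fun r s h => by
          have := mul_le_mul_of_nonneg_left h ht0
          simpa using this
      have := Finset.apply_sup'_eq_sup'_comp (s := Finset.univ) Finset.univ_nonempty
        (f := fun x => w.px γ x)
        (fun r : ℝ => t * r + (1 - t) * (1 / (Fintype.card X : ℝ))) (fun r s => hmono.map_sup r s)
      simp only [Function.comp_def] at this
      rw [← this]
      ring
    simp_rw [key]
    rw [MeasureTheory.integral_const_mul]
    exact mul_le_mul_of_nonneg_left w.leak ht0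

end AMDLWitness

/-- Replacing `P` by `t P + (1 - t) R` scales the difference `P - R`, whose total variation norm is
at most `1`, by `1 - t`. -/
lemma tvDist_mix_le {X Y A B : Type} [Fintype X] [Fintype Y] [Fintype A] [Fintype B]
    {P R : A → B → X → Y → ℝ} (hP : IsBehavior P) (hR : IsBehavior R) {t : ℝ} (ht : t ≤ 1) :
    tvDist P (fun a b x y => t * P a b x y + (1 - t) * R a b x y) ≤ 1 - t := by
  have hbound (a b x y) : |P a b x y - (t * P a b x y + (1 - t) * R a b x y)| ≤
      (1 - t) * (P a b x y + R a b x y) := by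
    have hp := hP.1 a b x y
    have hr := hR.1 a b x y
    rw [show P a b x y - (t * P a b x y + (1 - t) * R a b x y) =
      (1 - t) * (P a b x y - R a b x y) by ring, abs_mul, abs_of_nonneg (sub_nonneg.2 ht)]
    refine mul_le_mul_of_nonneg_left ?_ (sub_nonneg.2 ht)
    rw [abs_le]
    constructor <;> linarith
  have hsum : ∑ a, ∑ b, ∑ x, ∑ y, |P a b x y - (t * P a b x y + (1 - t) * R a b x y)| ≤
      ∑ a, ∑ b, ∑ x, ∑ y, (1 - t) * (P a b x y + R a b x y) := by
    gcongr
    exact hbound _ _ _ _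
  simp_rw [← Finset.mul_sum, Finset.sum_add_distrib, hP.2, hR.2] at hsum
  unfold tvDist
  linarith

/-- continuity of the AMDL set. -/
theorem amdl_continuity
    (X Y A B : Type) [Fintype X] [Fintype Y] [Fintype A] [Fintype B]
    [Nonempty X] [Nonempty Y] [Nonempty A] [Nonempty B]
    (κ ε : ℝ) (hκ : 0 ≤ κ) (hε : 0 < ε)
    (P : A → B → X → Y → ℝ) (hP : MemAMDL (κ + ε) P) :
    ∃ Q : A → B → X → Y → ℝ, MemAMDL κ Q ∧ tvDist P Q ≤ ε / (κ + ε) := by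
  obtain ⟨w⟩ := hP
  have hpos : 0 < κ + ε := by linarith
  have ht0 : 0 ≤ κ / (κ + ε) := by positivity
  have ht1 : κ / (κ + ε) ≤ 1 := (div_le_one hpos).2 (by linarith)
  refine ⟨_, ⟨(div_mul_cancel₀ κ hpos.ne') ▸ w.mix (κ / (κ + ε)) ht0 ht1⟩, ?_⟩
  -- The mixture with `t = 0` is the uniform-input behavior itself.
  have w0 := w.mix 0 le_rfl zero_le_one
  simp only [zero_mul, sub_zero, one_mul, zero_add] at w0
  refine (tvDist_mix_le ⟨w.nonneg, w.sum_eq_one⟩ ⟨w0.nonneg, w0.sum_eq_one⟩ ht1).trans_eq ?_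
  field_simp
  ring
end

section
/- Let 𝒳, 𝒴, 𝒜, ℬ be finite nonempty sets and κ ≥ 0. Then the one-sided average measurement-dependent local set AMDL(κ), viewed as a subset of the real vector space ℝ^(𝒜×ℬ×𝒳×𝒴), is a polytope: there exists a finite set F of behaviors such that AMDL(κ) is the convex hull of F. -/
open MeasureTheory

/-! ### Simplices cut by a half-space -/

/-- Redistribution identity. Indices with `t i ≤ c` have surplus `a i = c - t i`, the others
have deficit `b i = t i - c`; matching the total deficit against the surplus proportionally
rewrites `∑ w i • e i` as a combination of low points and of pair terms balanced at level `c`. -/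
lemma transport_identity {ι M : Type*} [Fintype ι] [AddCommGroup M] [Module ℝ M]
    (e : ι → M) (w l a b : ι → ℝ) (α β : ℝ) (hα : α ≠ 0)
    (hαd : ∑ i, w i * a i = α) (hβd : ∑ i, w i * b i = β) :
    ∑ i, (w i * l i * (1 - β / α)) • e i +
      ∑ i, ∑ j, (w i * w j / α) • ((l i * b j) • e i + (a i * (1 - l j)) • e j)
      = ∑ i, w i • e i := by
  have h1 : ∀ i, ∑ j, (w i * w j / α) • ((l i * b j) • e i) = (w i * l i * (β / α)) • e i := by
    intro i
    simp only [smul_smul]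
    rw [← Finset.sum_smul, ← hβd]
    congr 1
    rw [Finset.sum_div, Finset.mul_sum]
    exact Finset.sum_congr rfl fun j _ => by ring
  have h2 : ∀ j, ∑ i, (w i * w j / α) • ((a i * (1 - l j)) • e j) = (w j * (1 - l j)) • e j := by
    intro j
    simp only [smul_smul]
    rw [← Finset.sum_smul]
    congr 1
    have : ∑ i, w i * w j / α * (a i * (1 - l j)) = (∑ i, w i * a i) * (w j * (1 - l j) / α) := by
      rw [Finset.sum_mul]
      exact Finset.sum_congr rfl fun j _ => by ring
    rw [this, hαd]
    field_simp
  simp only [smul_add, Finset.sum_add_distrib]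
  rw [Finset.sum_comm (f := fun i j => (w i * w j / α) • ((a i * (1 - l j)) • e j))]
  simp only [h1, h2, ← Finset.sum_add_distrib, ← add_smul]
  exact Finset.sum_congr rfl fun i _ => by congr 1; ring

/-- The part of the standard simplex cut off by a half-space is a polytope: its vertices are
simplex vertices below the level and the points at the level on edges crossing it. -/
lemma simplex_halfspace_polytope {ι : Type*} [Fintype ι] (t : ι → ℝ) (c : ℝ) :
    ∃ G : Set (ι → ℝ), G.Finite ∧
      {w | w ∈ stdSimplex ℝ ι ∧ ∑ i, w i * t i ≤ c} = convexHull ℝ G := by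
  classical
  set S : Set (ι → ℝ) := {w | w ∈ stdSimplex ℝ ι ∧ ∑ i, w i * t i ≤ c} with hS
  have hSc : Convex ℝ S := by
    refine (convex_stdSimplex ℝ ι).inter ?_
    refine convex_halfSpace_le (f := fun w : ι → ℝ => ∑ i, w i * t i) ⟨?_, ?_⟩ c
    · intro x y; simp [add_mul, Finset.sum_add_distrib]
    · intro r x; simp [Finset.mul_sum, mul_assoc]
  let e : ι → ι → ℝ := fun i => Pi.single i 1
  let m : ι → ι → ι → ℝ := fun i j =>
    (t j - t i)⁻¹ • ((t j - c) • e i + (c - t i) • e j)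
  let G : Set (ι → ℝ) := {v | ∃ i, t i ≤ c ∧ v = e i} ∪ {v | ∃ i j, t i ≤ c ∧ c < t j ∧ v = m i j}
  have het : ∀ i, ∑ k, e i k * t k = t i := by
    intro i; simp [e, Pi.single_apply]
  have hes : ∀ i, e i ∈ stdSimplex ℝ ι := fun i => single_mem_stdSimplex ℝ i
  have hGfin : G.Finite := by
    refine Set.Finite.subset ((Set.finite_range e).union
      (Set.finite_range fun p : ι × ι => m p.1 p.2)) ?_
    rintro v (⟨i, _, rfl⟩ | ⟨i, j, _, _, rfl⟩)
    · exact Or.inl ⟨i, rfl⟩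
    · exact Or.inr ⟨(i, j), rfl⟩
  refine ⟨G, hGfin, Set.Subset.antisymm ?_ (convexHull_min ?_ hSc)⟩
  · rintro w ⟨⟨hw0, hw1⟩, hwt⟩
    have hwe : ∑ i, w i • e i = w := by
      ext k; simp [e, Finset.sum_apply, Pi.single_apply]
    let l : ι → ℝ := fun i => if t i ≤ c then 1 else 0
    let a : ι → ℝ := fun i => if t i ≤ c then c - t i else 0
    let b : ι → ℝ := fun i => if t i ≤ c then 0 else t i - c
    have ha : ∀ i, 0 ≤ a i := by intro i; simp only [a]; split_ifs <;> linarith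
    have hb : ∀ i, 0 ≤ b i := by intro i; simp only [b]; split_ifs <;> linarith
    set α := ∑ i, w i * a i with hα
    set β := ∑ i, w i * b i with hβ
    have hβ0 : 0 ≤ β := Finset.sum_nonneg fun i _ => mul_nonneg (hw0 i) (hb i)
    have hβα : β ≤ α := by
      have : α - β = c - ∑ i, w i * t i := by
        rw [hα, hβ, ← Finset.sum_sub_distrib]
        have : c = ∑ i, w i * c := by rw [← Finset.sum_mul, hw1, one_mul]
        conv_rhs => rw [this, ← Finset.sum_sub_distrib]
        refine Finset.sum_congr rfl fun i _ => ?_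
        simp only [a, b]; split_ifs <;> ring
      linarith
    have hK := convex_convexHull ℝ G
    rcases (hβ0.trans hβα).eq_or_lt with h0 | hpos
    -- No surplus forces no deficit, so all the weight sits on low vertices.
    · have hβz : β = 0 := by linarith
      rw [← hwe, ← finsum_eq_sum_of_fintype]
      refine hK.finsum_mem hw0 (by rwa [finsum_eq_sum_of_fintype]) fun i hi => ?_
      refine subset_convexHull ℝ G (Or.inl ⟨i, ?_, rfl⟩)
      have := (Finset.sum_eq_zero_iff_of_nonneg
        (fun i _ => mul_nonneg (hw0 i) (hb i))).1 hβz i (Finset.mem_univ i)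
      have hbi : b i = 0 := (mul_eq_zero.1 this).resolve_left hi
      by_contra hc
      simp only [b, if_neg hc] at hbi
      linarith
    · let W : ι ⊕ ι × ι → ℝ := Sum.elim (fun i => w i * l i * (1 - β / α))
        (fun p => w p.1 * w p.2 / α * (l p.1 * b p.2 + a p.1 * (1 - l p.2)))
      let z : ι ⊕ ι × ι → ι → ℝ := Sum.elim e (fun p => m p.1 p.2)
      have hr : 0 ≤ 1 - β / α := by
        rw [sub_nonneg, div_le_one hpos]; exact hβα
      have hl : ∀ i, 0 ≤ l i := by intro i; simp only [l]; split_ifs <;> norm_num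
      have hl1 : ∀ i, 0 ≤ 1 - l i := by intro i; simp only [l]; split_ifs <;> norm_num
      have hW0 : ∀ k, 0 ≤ W k := by
        rintro (i | ⟨i, j⟩)
        · exact mul_nonneg (mul_nonneg (hw0 i) (hl i)) hr
        · exact mul_nonneg (div_nonneg (mul_nonneg (hw0 i) (hw0 j)) hpos.le)
            (add_nonneg (mul_nonneg (hl i) (hb j)) (mul_nonneg (ha i) (hl1 j)))
      have hW1 : ∑ k, W k = 1 := by
        have := transport_identity (fun _ : ι => (1 : ℝ)) w l a b α β hpos.ne' rfl rfl
        simp only [smul_eq_mul, mul_one] at this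
        rw [Fintype.sum_sum_type, Fintype.sum_prod_type]
        simp only [W, Sum.elim_inl, Sum.elim_inr]
        rw [this, hw1]
      have hWz : ∑ k, W k • z k = w := by
        have := transport_identity e w l a b α β hpos.ne' rfl rfl
        rw [hwe] at this
        rw [Fintype.sum_sum_type, Fintype.sum_prod_type]
        simp only [W, z, Sum.elim_inl, Sum.elim_inr]
        refine Eq.trans ?_ this
        congr 1
        refine Finset.sum_congr rfl fun i _ => Finset.sum_congr rfl fun j _ => ?_
        rw [mul_smul]
        congr 1
        by_cases hi : t i ≤ c <;> by_cases hj : t j ≤ c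
        · simp [l, a, b, hi, hj]
        · have : t j - t i ≠ 0 := by intro h; apply hj; linarith
          simp only [l, a, b, m, hi, hj, if_true, if_false, one_mul, sub_zero, mul_one]
          rw [smul_smul, show t j - c + (c - t i) = t j - t i by ring, mul_inv_cancel₀ this,
            one_smul]
        · simp [l, a, b, hi, hj]
        · simp [l, a, b, hi, hj]
      rw [← hWz, ← finsum_eq_sum_of_fintype]
      refine hK.finsum_mem hW0 (by rwa [finsum_eq_sum_of_fintype]) fun k hk => ?_
      refine subset_convexHull ℝ G ?_
      rcases k with i | ⟨i, j⟩
      · refine Or.inl ⟨i, ?_, rfl⟩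
        by_contra hc
        exact hk (by simp [W, l, hc])
      · refine Or.inr ⟨i, j, ?_, ?_, rfl⟩
        · by_contra hc
          exact hk (by simp [W, l, a, hc])
        · by_contra hc
          exact hk (by simp [W, l, b, not_lt.1 hc])
  · rintro v (⟨i, hi, rfl⟩ | ⟨i, j, hi, hj, rfl⟩)
    · exact ⟨hes i, by rw [het]; exact hi⟩
    · have hd : 0 < t j - t i := by linarith
      have hm : m i j = ((t j - c) / (t j - t i)) • e i + ((c - t i) / (t j - t i)) • e j := by
        simp only [m, smul_add, smul_smul, div_eq_inv_mul]
      refine ⟨?_, ?_⟩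
      · rw [hm]
        refine convex_stdSimplex ℝ ι (hes i) (hes j) (div_nonneg (by linarith) hd.le)
          (div_nonneg (by linarith) hd.le) ?_
        field_simp; ring
      · have : ∑ k, m i j k * t k
            = (t j - c) / (t j - t i) * ∑ k, e i k * t k
              + (c - t i) / (t j - t i) * ∑ k, e j k * t k := by
          rw [hm, Finset.mul_sum, Finset.mul_sum, ← Finset.sum_add_distrib]
          refine Finset.sum_congr rfl fun k _ => ?_
          simp only [Pi.add_apply, Pi.smul_apply, smul_eq_mul]; ring
        rw [this, het, het]
        apply le_of_eq
        field_simp; ring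

/-! ### Decomposition of local models -/

/-- Layer decomposition: a nonnegative function on a finite set is a nonnegative combination of
indicators of nonempty subsets whose total coefficient is bounded by some value of the function
(hence equals its maximum). Peeling off `min` on the support shrinks the support. -/
lemma layer_decomposition {X : Type*} [Fintype X] [DecidableEq X] [Nonempty X] (n : ℕ) :
    ∀ p : X → ℝ, (∀ x, 0 ≤ p x) → (Finset.univ.filter fun x => p x ≠ 0).card ≤ n →
      ∃ c : {S : Finset X // S.Nonempty} → ℝ, (∀ S, 0 ≤ c S) ∧
        (∀ x, ∑ S, c S * (if x ∈ S.1 then 1 else 0) = p x) ∧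
        ∃ x, ∑ S, c S ≤ p x := by
  induction n with
  | zero =>
    intro p _ hn
    have hz : ∀ x, p x = 0 := by
      intro x
      have h := Finset.card_eq_zero.1 (Nat.le_zero.1 hn)
      by_contra hx
      have : x ∈ Finset.univ.filter fun x => p x ≠ 0 := by simp [hx]
      rw [h] at this
      simp at this
    exact ⟨fun _ => 0, by simp, by simp [hz], Classical.arbitrary X, by simp [hz]⟩
  | succ n ih =>
    intro p hp hn
    set T := Finset.univ.filter fun x => p x ≠ 0 with hT
    by_cases hTe : T.Nonempty
    · obtain ⟨x₀, hx₀, hmin⟩ := T.exists_min_image p hTe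
      have hm : 0 ≤ p x₀ := hp x₀
      let p' : X → ℝ := fun x => p x - p x₀ * (if x ∈ T then 1 else 0)
      have hp' : ∀ x, 0 ≤ p' x := by
        intro x
        simp only [p']
        split_ifs with hx
        · have := hmin x hx; linarith
        · have := hp x; linarith
      have hsub : (Finset.univ.filter fun x => p' x ≠ 0) ⊆ T.erase x₀ := by
        intro x hx
        simp only [Finset.mem_filter, Finset.mem_univ, true_and, p'] at hx
        rw [Finset.mem_erase]
        constructor
        · rintro rfl
          exact hx (by simp [hx₀])
        · by_contra hxT
          apply hx
          have : p x = 0 := by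
            by_contra h
            exact hxT (by simp [hT, h])
          simp [hxT, this]
      have hcard : (Finset.univ.filter fun x => p' x ≠ 0).card ≤ n := by
        have h1 := Finset.card_le_card hsub
        rw [Finset.card_erase_of_mem hx₀] at h1
        omega
      obtain ⟨c, hc0, hcp, x₁, hx₁⟩ := ih p' hp' hcard
      let d : {S : Finset X // S.Nonempty} → ℝ := fun S => if S = ⟨T, hTe⟩ then p x₀ else 0
      refine ⟨fun S => c S + d S, fun S => add_nonneg (hc0 S) ?_, fun x => ?_, ?_⟩
      · simp only [d]; split_ifs
        · exact hm
        · exact le_rfl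
      · simp only [add_mul, Finset.sum_add_distrib, hcp]
        rw [Fintype.sum_eq_single (⟨T, hTe⟩ : {S : Finset X // S.Nonempty})
          (fun S hS => by simp [d, hS])]
        simp [d, p']
      · have hs : ∑ S, (c S + d S) = ∑ S, c S + p x₀ := by
          simp [Finset.sum_add_distrib, d]
        rw [hs]
        by_cases hx : x₁ ∈ T
        · exact ⟨x₁, by simp only [p', hx, if_true] at hx₁; linarith⟩
        · refine ⟨x₀, ?_⟩
          have : p x₁ = 0 := by
            by_contra h
            exact hx (by simp [hT, h])
          simp only [p', hx, if_false, this] at hx₁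
          linarith
    · refine ih p hp ?_
      rw [← hT, Finset.not_nonempty_iff_eq_empty.1 hTe]
      simp

/-- A probability vector `p` is a mixture of uniform distributions on nonempty subsets `S`, with
the mean of `1 / |S|` equal to the maximum of `p`. -/
lemma uniform_decomposition {X : Type*} [Fintype X] [DecidableEq X] [Nonempty X]
    (p : X → ℝ) (hp : ∀ x, 0 ≤ p x) (hp1 : ∑ x, p x = 1) :
    ∃ W : {S : Finset X // S.Nonempty} → ℝ, (∀ S, 0 ≤ W S) ∧ ∑ S, W S = 1 ∧
      (∀ x, ∑ S, W S * (if x ∈ S.1 then 1 / (S.1.card : ℝ) else 0) = p x) ∧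
      ∑ S, W S * (1 / (S.1.card : ℝ)) = Finset.univ.sup' Finset.univ_nonempty p := by
  obtain ⟨c, hc0, hcp, x₁, hx₁⟩ := layer_decomposition _ p hp le_rfl
  have hne : ∀ S : {S : Finset X // S.Nonempty}, (S.1.card : ℝ) ≠ 0 := fun S => by
    have := S.2.card_pos; positivity
  refine ⟨fun S => c S * S.1.card, fun S => mul_nonneg (hc0 S) (Nat.cast_nonneg _), ?_, ?_, ?_⟩
  · rw [← hp1]
    simp only [← hcp]
    rw [Finset.sum_comm]
    refine Finset.sum_congr rfl fun S _ => ?_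
    rw [← Finset.mul_sum]
    simp
  · intro x
    rw [← hcp x]
    refine Finset.sum_congr rfl fun S _ => ?_
    have := hne S
    split_ifs
    · field_simp
    · simp
  · have h1 : ∑ S : {S : Finset X // S.Nonempty}, c S * (S.1.card : ℝ) * (1 / (S.1.card : ℝ))
        = ∑ S, c S := Finset.sum_congr rfl fun S _ => by
      have := hne S; field_simp
    rw [h1]
    apply le_antisymm
    · exact hx₁.trans (Finset.le_sup' p (Finset.mem_univ x₁))
    · refine Finset.sup'_le _ _ fun x _ => ?_
      rw [← hcp x]
      refine Finset.sum_le_sum fun S _ => ?_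
      split_ifs
      · simp
      · simpa using hc0 S

/-- Total mass of the product distribution on deterministic response functions. -/
lemma sum_prod_response {X A : Type*} [Fintype X] [Fintype A] [DecidableEq X]
    (p : X → A → ℝ) (h : ∀ x, ∑ a, p x a = 1) : ∑ f : X → A, ∏ x, p x (f x) = 1 := by
  rw [← Fintype.piFinset_univ, Finset.sum_prod_piFinset]
  simp [h]

/-- The product distribution on deterministic response functions has marginals `p x`. -/
lemma sum_prod_response_marginal {X A : Type*} [Fintype X] [Fintype A] [DecidableEq X]
    [DecidableEq A] (p : X → A → ℝ) (h : ∀ x, ∑ a, p x a = 1) (x : X) (a : A) :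
    ∑ f : X → A, (∏ x', p x' (f x')) * (if f x = a then 1 else 0) = p x a := by
  have h1 : ∀ f : X → A, (∏ x', p x' (f x')) * (if f x = a then (1 : ℝ) else 0)
      = ∏ x', p x' (f x') * (if x' = x then (if f x' = a then 1 else 0) else 1) := by
    intro f
    rw [Finset.prod_mul_distrib, Finset.prod_ite_eq']
    simp
  simp only [h1]
  rw [← Fintype.piFinset_univ, Finset.sum_prod_piFinset (Finset.univ)
    (fun x' b => p x' b * (if x' = x then (if b = a then 1 else 0) else 1))]
  rw [Finset.prod_eq_single x]
  · simp
  · intro x' _ hx'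
    simp [hx', h]
  · simp

/-! ### Extremal strategies and `AMDL(κ)` -/

/-- Extremal hidden-variable strategies: the setting `x` is uniform on a nonempty subset `S`, and
both outcomes are deterministic functions of the local settings. -/
abbrev Strategy (X Y A B : Type) : Type :=
  {S : Finset X // S.Nonempty} × (X → A) × (Y → B)

set_option linter.unusedSectionVars false

section Strategy

variable {X Y A B : Type} [Fintype X] [Fintype Y] [Fintype A] [Fintype B]
  [DecidableEq X] [DecidableEq Y] [DecidableEq A] [DecidableEq B]

/-- The distribution of the setting `x` under a strategy: uniform on the chosen subset. -/
noncomputable def Strategy.px (s : Strategy X Y A B) (x : X) : ℝ :=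
  if x ∈ s.1.1 then 1 / (s.1.1.card : ℝ) else 0

/-- The first party's deterministic response, as a conditional distribution. -/
noncomputable def Strategy.pa (s : Strategy X Y A B) (x : X) (a : A) : ℝ :=
  if s.2.1 x = a then 1 else 0

/-- The second party's deterministic response, as a conditional distribution. -/
noncomputable def Strategy.pb (s : Strategy X Y A B) (y : Y) (b : B) : ℝ :=
  if s.2.2 y = b then 1 else 0

/-- The behavior produced by a strategy. -/
noncomputable def Strategy.point (s : Strategy X Y A B) : A → B → X → Y → ℝ :=
  fun a b x y => s.px x * (1 / (Fintype.card Y : ℝ)) * s.pa x a * s.pb y b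

/-- The largest setting probability under a strategy. -/
noncomputable def Strategy.peak (s : Strategy X Y A B) : ℝ := 1 / (s.1.1.card : ℝ)

lemma Strategy.px_nonneg (s : Strategy X Y A B) (x : X) : 0 ≤ s.px x := by
  unfold Strategy.px; split_ifs <;> positivity

lemma Strategy.pa_nonneg (s : Strategy X Y A B) (x : X) (a : A) : 0 ≤ s.pa x a := by
  unfold Strategy.pa; split_ifs <;> norm_num

lemma Strategy.pb_nonneg (s : Strategy X Y A B) (y : Y) (b : B) : 0 ≤ s.pb y b := by
  unfold Strategy.pb; split_ifs <;> norm_num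

lemma Strategy.px_sum (s : Strategy X Y A B) : ∑ x, s.px x = 1 := by
  have : (s.1.1.card : ℝ) ≠ 0 := by
    have := s.1.2.card_pos; positivity
  simp [Strategy.px, this]

lemma Strategy.pa_sum (s : Strategy X Y A B) (x : X) : ∑ a, s.pa x a = 1 := by
  simp [Strategy.pa]

lemma Strategy.pb_sum (s : Strategy X Y A B) (y : Y) : ∑ b, s.pb y b = 1 := by
  simp [Strategy.pb]

lemma Strategy.sup_px [Nonempty X] (s : Strategy X Y A B) :
    Finset.univ.sup' Finset.univ_nonempty s.px = s.peak := by
  apply le_antisymm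
  · refine Finset.sup'_le _ _ fun x _ => ?_
    unfold Strategy.px Strategy.peak
    split_ifs
    · exact le_rfl
    · positivity
  · obtain ⟨x, hx⟩ := s.1.2
    have : s.peak = s.px x := by simp [Strategy.px, Strategy.peak, hx]
    rw [this]
    exact Finset.le_sup' s.px (Finset.mem_univ x)

lemma Strategy.point_isBehavior [Nonempty Y] (s : Strategy X Y A B) : IsBehavior s.point := by
  refine ⟨fun a b x y => mul_nonneg (mul_nonneg (mul_nonneg (s.px_nonneg x) (by positivity))
    (s.pa_nonneg x a)) (s.pb_nonneg y b), ?_⟩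
  have h1 : ∀ x, ∑ a, ∑ b, ∑ y, s.point a b x y = s.px x := by
    intro x
    have : ∀ a, ∑ b, ∑ y, s.point a b x y = s.px x * s.pa x a := by
      intro a
      rw [Finset.sum_comm]
      simp only [Strategy.point, ← Finset.mul_sum, s.pb_sum]
      simp
      field_simp
    simp only [this, ← Finset.mul_sum, s.pa_sum, mul_one]
  rw [← s.px_sum]
  simp only [← h1]
  rw [Finset.sum_comm (s := (Finset.univ : Finset X))]
  exact Finset.sum_congr rfl fun a _ => Finset.sum_comm

/-- Every local model at a fixed hidden variable is a mixture of extremal strategies, with the mean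
peak equal to the largest setting probability. -/
lemma strategy_decomposition [Nonempty X] (px : X → ℝ) (pa : X → A → ℝ) (pb : Y → B → ℝ)
    (hx : ∀ x, 0 ≤ px x) (hx1 : ∑ x, px x = 1)
    (ha : ∀ x a, 0 ≤ pa x a) (ha1 : ∀ x, ∑ a, pa x a = 1)
    (hb : ∀ y b, 0 ≤ pb y b) (hb1 : ∀ y, ∑ b, pb y b = 1) :
    ∃ w ∈ stdSimplex ℝ (Strategy X Y A B),
      (∑ s, w s • s.point = fun a b x y => px x * (1 / (Fintype.card Y : ℝ)) * pa x a * pb y b) ∧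
      ∑ s, w s * s.peak = Finset.univ.sup' Finset.univ_nonempty px := by
  obtain ⟨W, hW0, hW1, hWp, hWs⟩ := uniform_decomposition px hx hx1
  have hA := sum_prod_response pa ha1
  have hB := sum_prod_response pb hb1
  -- Sums of product weights against product functions factor over the three components.
  have key : ∀ (u : {S : Finset X // S.Nonempty} → ℝ) (v : (X → A) → ℝ) (r : (Y → B) → ℝ),
      ∑ s : Strategy X Y A B, (W s.1 * (∏ x, pa x (s.2.1 x)) * (∏ y, pb y (s.2.2 y)))
          * (u s.1 * v s.2.1 * r s.2.2)
        = (∑ S, W S * u S) * (∑ f : X → A, (∏ x, pa x (f x)) * v f)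
          * (∑ g : Y → B, (∏ y, pb y (g y)) * r g) := by
    intro u v r
    rw [mul_assoc, Finset.sum_mul_sum, Finset.sum_mul_sum, Fintype.sum_prod_type]
    refine Finset.sum_congr rfl fun S _ => ?_
    rw [Fintype.sum_prod_type, ← Finset.mul_sum, Finset.mul_sum]
    refine Finset.sum_congr rfl fun f _ => ?_
    rw [Finset.mul_sum]
    exact Finset.sum_congr rfl fun g _ => by ring
  refine ⟨fun s => W s.1 * (∏ x, pa x (s.2.1 x)) * (∏ y, pb y (s.2.2 y)), ⟨fun s => ?_, ?_⟩,
    ?_, ?_⟩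
  · exact mul_nonneg (mul_nonneg (hW0 _) (Finset.prod_nonneg fun x _ => ha x _))
      (Finset.prod_nonneg fun y _ => hb y _)
  · have := key (fun _ => 1) (fun _ => 1) (fun _ => 1)
    simpa [hW1, hA, hB] using this
  · ext a b x y
    have := key (fun S => (if x ∈ S.1 then 1 / (S.1.card : ℝ) else 0))
      (fun f => if f x = a then 1 else 0) (fun g => if g y = b then 1 else 0)
    rw [hWp, sum_prod_response_marginal pa ha1, sum_prod_response_marginal pb hb1] at this
    simp only [Finset.sum_apply, Pi.smul_apply, smul_eq_mul]
    rw [show px x * (1 / (Fintype.card Y : ℝ)) * pa x a * pb y b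
      = (px x * pa x a * pb y b) * (1 / (Fintype.card Y : ℝ)) by ring, ← this, Finset.sum_mul]
    refine Finset.sum_congr rfl fun s _ => ?_
    simp only [Strategy.point, Strategy.px, Strategy.pa, Strategy.pb]
    ring
  · have := key (fun S => 1 / (S.1.card : ℝ)) (fun _ => 1) (fun _ => 1)
    rw [hWs] at this
    simpa [hA, hB, Strategy.peak] using this

/-- Averaging over the hidden variable stays inside the (compact, convex) set of mixtures of
extremal strategies, jointly with the mean peak. -/
lemma weights_of_memAMDL [Nonempty X] {κ : ℝ} {P : A → B → X → Y → ℝ} (h : MemAMDL κ P) :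
    ∃ w, (w ∈ stdSimplex ℝ (Strategy X Y A B) ∧
      ∑ s, w s * Strategy.peak s ≤ κ + 1 / (Fintype.card X : ℝ)) ∧ ∑ s, w s • s.point = P := by
  obtain ⟨HV, g, prob, px, pa, pb, mx, ma, mb, hx, hx1, ha, ha1, hb, hb1, hrepr, hleak⟩ := h
  let L : (Strategy X Y A B → ℝ) →ₗ[ℝ] (A → B → X → Y → ℝ) × ℝ :=
    Fintype.linearCombination ℝ fun s => (s.point, s.peak)
  have hL : ∀ w, L w = (∑ s, w s • s.point, ∑ s, w s * s.peak) := by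
    intro w
    simp only [L, Fintype.linearCombination_apply]
    ext : 1
    · simp [Prod.fst_sum]
    · simp [Prod.snd_sum]
  let K := L '' stdSimplex ℝ (Strategy X Y A B)
  have hKconv : Convex ℝ K := (convex_stdSimplex ℝ _).linear_image L
  have hKclosed : IsClosed K :=
    ((isCompact_stdSimplex ℝ _).image L.continuous_of_finiteDimensional).isClosed
  let F : HV → A → B → X → Y → ℝ :=
    fun γ a b x y => px γ x * (1 / (Fintype.card Y : ℝ)) * pa γ x a * pb γ y b
  let m : HV → ℝ := fun γ => Finset.univ.sup' Finset.univ_nonempty (px γ)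
  have hmem : ∀ γ, (F γ, m γ) ∈ K := by
    intro γ
    obtain ⟨w, hw, h1, h2⟩ := strategy_decomposition (px γ) (pa γ) (pb γ) (hx γ) (hx1 γ)
      (ha γ) (ha1 γ) (hb γ) (hb1 γ)
    exact ⟨w, hw, by rw [hL, h1, h2]⟩
  have hmmeas : Measurable m := by
    have : m = Finset.univ.sup' Finset.univ_nonempty (fun x γ => px γ x) := by
      ext γ; simp [m, Finset.sup'_apply]
    rw [this]
    exact Finset.measurable_sup' _ fun x _ => mx x
  have hbdd : Bornology.IsBounded K :=
    ((isCompact_stdSimplex ℝ _).image L.continuous_of_finiteDimensional).isBounded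
  obtain ⟨C, hC⟩ := hbdd.exists_norm_le
  have hFi : Integrable F g := by
    refine Integrable.of_eval fun a => Integrable.of_eval fun b => Integrable.of_eval fun x =>
      Integrable.of_eval fun y => ?_
    refine Integrable.of_bound
      ((((mx x).mul_const _).mul (ma x a)).mul (mb y b)).aestronglyMeasurable C
      (Filter.Eventually.of_forall fun γ => ?_)
    calc ‖F γ a b x y‖ ≤ ‖F γ a b x‖ := norm_le_pi_norm (F γ a b x) y
      _ ≤ ‖F γ a b‖ := norm_le_pi_norm (F γ a b) x
      _ ≤ ‖F γ a‖ := norm_le_pi_norm (F γ a) b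
      _ ≤ ‖F γ‖ := norm_le_pi_norm (F γ) a
      _ ≤ C := (norm_fst_le (F γ, m γ)).trans (hC _ (hmem γ))
  have hmi : Integrable m g := Integrable.of_bound hmmeas.aestronglyMeasurable C
    (Filter.Eventually.of_forall fun γ => (norm_snd_le (F γ, m γ)).trans (hC _ (hmem γ)))
  have hint : Integrable (fun γ => (F γ, m γ)) g := hFi.prodMk hmi
  obtain ⟨w, hw, hwL⟩ := hKconv.integral_mem hKclosed (Filter.Eventually.of_forall hmem) hint
  rw [hL, integral_pair hFi hmi] at hwL
  obtain ⟨hw1, hw2⟩ := Prod.mk.inj hwL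
  refine ⟨w, ⟨hw, ?_⟩, ?_⟩
  · rw [hw2]
    rw [integral_sub hmi (integrable_const _)] at hleak
    simp only [integral_const, probReal_univ, one_smul] at hleak
    simp only [m]
    linarith
  · rw [hw1]
    ext a b x y
    rw [hrepr]
    have h1 := fun a => hFi.eval a
    have h2 := fun b => (h1 a).eval b
    have h3 := fun x => (h2 b).eval x
    have h4 := fun y => (h3 x).eval y
    rw [eval_integral h1, eval_integral h2, eval_integral h3, eval_integral h4]

/-- A mixture of extremal strategies with small mean peak is realised by a discrete hidden variable
ranging over the strategies. -/
lemma memAMDL_of_weights [Nonempty X] {κ : ℝ} {w : Strategy X Y A B → ℝ}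
    (hw : w ∈ stdSimplex ℝ (Strategy X Y A B))
    (hκ : ∑ s, w s * Strategy.peak s ≤ κ + 1 / (Fintype.card X : ℝ)) :
    MemAMDL κ (∑ s, w s • Strategy.point s) := by
  let _ : MeasurableSpace (Strategy X Y A B) := ⊤
  let g : Measure (Strategy X Y A B) := ∑ s, ENNReal.ofReal (w s) • Measure.dirac s
  have hg : IsProbabilityMeasure g := by
    constructor
    simp only [g, Measure.finsetSum_apply, Measure.smul_apply, measure_univ, smul_eq_mul, mul_one]
    rw [← ENNReal.ofReal_sum_of_nonneg fun s _ => hw.1 s, hw.2, ENNReal.ofReal_one]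
  have hgi : ∀ f : Strategy X Y A B → ℝ, ∫ s, f s ∂g = ∑ s, w s * f s := by
    intro f
    rw [integral_finsetSum_measure]
    · refine Finset.sum_congr rfl fun s _ => ?_
      rw [integral_smul_measure, integral_dirac, ENNReal.toReal_ofReal (hw.1 s), smul_eq_mul]
    · intro s _
      exact (integrable_dirac (by simp)).smul_measure ENNReal.ofReal_ne_top
  refine ⟨{
    HV := Strategy X Y A B
    g := g
    prob := hg
    px := Strategy.px
    pa := Strategy.pa
    pb := Strategy.pb
    meas_px := fun _ => measurable_from_top
    meas_pa := fun _ _ => measurable_from_top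
    meas_pb := fun _ _ => measurable_from_top
    px_nonneg := Strategy.px_nonneg
    px_sum := Strategy.px_sum
    pa_nonneg := Strategy.pa_nonneg
    pa_sum := Strategy.pa_sum
    pb_nonneg := Strategy.pb_nonneg
    pb_sum := Strategy.pb_sum
    repr := ?_
    leak := ?_ }⟩
  · intro a b x y
    rw [hgi]
    simp [Finset.sum_apply, Strategy.point]
  · rw [hgi]
    have : ∀ s : Strategy X Y A B,
        Finset.univ.sup' Finset.univ_nonempty (fun x => s.px x) = s.peak := Strategy.sup_px
    simp only [this, mul_sub, Finset.sum_sub_distrib, ← Finset.sum_mul, hw.2, one_mul]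
    linarith

lemma isBehavior_of_weights [Nonempty Y] {w : Strategy X Y A B → ℝ}
    (hw : w ∈ stdSimplex ℝ (Strategy X Y A B)) :
    IsBehavior (∑ s, w s • Strategy.point s) := by
  have hconv : Convex ℝ {P : A → B → X → Y → ℝ | IsBehavior P} := by
    intro P hP Q hQ r t hr ht hrt
    refine ⟨fun a b x y => ?_, ?_⟩
    · exact add_nonneg (mul_nonneg hr (hP.1 a b x y)) (mul_nonneg ht (hQ.1 a b x y))
    · simp only [Pi.add_apply, Pi.smul_apply, smul_eq_mul, Finset.sum_add_distrib,
        ← Finset.mul_sum, hP.2, hQ.2, mul_one, hrt]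
  exact hconv.sum_mem (fun s _ => hw.1 s) hw.2 fun s _ => s.point_isBehavior

end Strategy

/-- `AMDL(κ)` is a polytope: the convex hull of finitely many behaviors. -/
theorem amdl_polytope
    (X Y A B : Type) [Fintype X] [Fintype Y] [Fintype A] [Fintype B]
    [Nonempty X] [Nonempty Y] [Nonempty A] [Nonempty B]
    (κ : ℝ) (hκ : 0 ≤ κ) :
    ∃ F : Set (A → B → X → Y → ℝ), F.Finite ∧ (∀ P ∈ F, IsBehavior P) ∧
      {P : A → B → X → Y → ℝ | MemAMDL κ P} = convexHull ℝ F := by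
  classical
  obtain ⟨G, hGfin, hG⟩ := simplex_halfspace_polytope
    (Strategy.peak (X := X) (Y := Y) (A := A) (B := B)) (κ + 1 / (Fintype.card X : ℝ))
  let L : (Strategy X Y A B → ℝ) →ₗ[ℝ] (A → B → X → Y → ℝ) :=
    Fintype.linearCombination ℝ Strategy.point
  have hL : ∀ w, L w = ∑ s, w s • s.point := fun w => Fintype.linearCombination_apply ℝ _ w
  refine ⟨L '' G, hGfin.image L, ?_, ?_⟩
  · rintro _ ⟨w, hw, rfl⟩
    have hw' := subset_convexHull ℝ G hw
    rw [← hG] at hw'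
    rw [hL]
    exact isBehavior_of_weights hw'.1
  · rw [← LinearMap.image_convexHull, ← hG]
    ext P
    constructor
    · intro hP
      obtain ⟨w, hw, rfl⟩ := weights_of_memAMDL hP
      exact ⟨w, hw, hL w⟩
    · rintro ⟨w, hw, rfl⟩
      rw [hL]
      exact memAMDL_of_weights hw.1 hw.2
end

section
/- Let 𝒳, 𝒴, 𝒜, ℬ be finite nonempty sets, κ ≥ 0, and let S := 𝒜^𝒳 × ℬ^𝒴 be the finite set of pairs of deterministic response functions s = (f_A, f_B). A behavior P on 𝒜×ℬ×𝒳×𝒴 belongs to AMDL(κ) if and only if there exist nonnegative reals w_{s,x} (for s ∈ S, x ∈ 𝒳) and r_s (for s ∈ S) such that: (i) Σ_{s∈S} Σ_{x∈𝒳} w_{s,x} = 1; (ii) r_s ≥ w_{s,x} for all s ∈ S and x ∈ 𝒳; (iii) Σ_{s∈S} r_s ≤ 1/|𝒳| + κ; and (iv) P(a,b,x,y) = (1/|𝒴|)·Σ_{s=(f_A,f_B)∈S} w_{s,x}·1[a = f_A(x)]·1[b = f_B(y)] for all a,b,x,y. -/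
open MeasureTheory

/-- Total mass of a product distribution on response functions. -/
lemma sum_prod_eq_one {X A : Type} [Fintype X] [Fintype A] [DecidableEq X]
    (p : X → A → ℝ) (hp : ∀ x, ∑ a, p x a = 1) :
    ∑ f : X → A, ∏ x, p x (f x) = 1 := by
  rw [← Fintype.prod_sum]
  simp [hp]

/-- The marginal at `x` of the product distribution `∏ x', p x'` on response functions is `p x`. -/
lemma sum_prod_mul_indicator {X A : Type} [Fintype X] [Fintype A] [DecidableEq X] [DecidableEq A]
    (p : X → A → ℝ) (hp : ∀ x, ∑ a, p x a = 1) (x : X) (a : A) :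
    ∑ f : X → A, (∏ x', p x' (f x')) * (if a = f x then (1 : ℝ) else 0) = p x a := by
  -- The indicator is absorbed into the factor at `x`, and sum and product are then exchanged.
  have h1 : ∀ f : X → A, (∏ x', p x' (f x')) * (if a = f x then (1 : ℝ) else 0)
      = ∏ x', p x' (f x') * (if x' = x then (if a = f x' then (1 : ℝ) else 0) else 1) := by
    intro f
    rw [Finset.prod_mul_distrib, Finset.prod_ite_eq' Finset.univ x]
    simp
  simp_rw [h1]
  rw [← Fintype.prod_sum (fun x' a' => p x' a' *
    (if x' = x then (if a = a' then (1 : ℝ) else 0) else 1)), Finset.prod_eq_single x]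
  · simp
  · intro b _ hb
    simp [hb, hp]
  · simp

/-- A measurable function with values in `[0, 1]` is integrable for a probability measure. -/
lemma integrable_of_unit {Ω : Type} [MeasurableSpace Ω] (μ : Measure Ω) [IsProbabilityMeasure μ]
    (f : Ω → ℝ) (hf : Measurable f) (h0 : ∀ ω, 0 ≤ f ω) (h1 : ∀ ω, f ω ≤ 1) :
    Integrable f μ :=
  Integrable.of_bound hf.aestronglyMeasurable 1
    (Filter.Eventually.of_forall fun ω => by
      rw [Real.norm_eq_abs, abs_of_nonneg (h0 ω)]; exact h1 ω)

/-- A hidden-variable model yields a feasible point of the linear program. -/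
lemma lp_of_memAMDL {X Y A B : Type} [Fintype X] [Fintype Y] [Fintype A] [Fintype B]
    [DecidableEq X] [DecidableEq Y] [DecidableEq A] [DecidableEq B] [Nonempty X]
    (κ : ℝ) (P : A → B → X → Y → ℝ) (h : MemAMDL κ P) :
      ∃ (w : ((X → A) × (Y → B)) → X → ℝ) (r : ((X → A) × (Y → B)) → ℝ),
        (∀ s x, 0 ≤ w s x) ∧ (∀ s, 0 ≤ r s) ∧
        (∑ s : (X → A) × (Y → B), ∑ x, w s x) = 1 ∧
        (∀ (s : (X → A) × (Y → B)) (x : X), w s x ≤ r s) ∧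
        (∑ s : (X → A) × (Y → B), r s) ≤ 1 / (Fintype.card X : ℝ) + κ ∧
        (∀ a b x y, P a b x y =
          (1 / (Fintype.card Y : ℝ)) * ∑ s : (X → A) × (Y → B),
            w s x * (if a = s.1 x then (1 : ℝ) else 0) *
              (if b = s.2 y then (1 : ℝ) else 0)) := by
  obtain ⟨⟨HV, g, prob, px, pa, pb, mpx, mpa, mpb, px0, px1, pa0, pa1, pb0, pb1, hrepr, hleak⟩⟩ := h
  let D : HV → ((X → A) × (Y → B)) → ℝ := fun γ s =>
    (∏ x, pa γ x (s.1 x)) * ∏ y, pb γ y (s.2 y)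
  let M : HV → ℝ := fun γ => Finset.univ.sup' Finset.univ_nonempty fun x => px γ x
  have D0 : ∀ γ s, 0 ≤ D γ s := fun γ s =>
    mul_nonneg (Finset.prod_nonneg fun x _ => pa0 γ x _) (Finset.prod_nonneg fun y _ => pb0 γ y _)
  have Dsum : ∀ γ, ∑ s, D γ s = 1 := by
    intro γ
    simp only [D, Fintype.sum_prod_type, ← Finset.mul_sum]
    rw [sum_prod_eq_one _ (pb1 γ)]
    simp [sum_prod_eq_one _ (pa1 γ)]
  have D1 : ∀ γ s, D γ s ≤ 1 := fun γ s => by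
    rw [← Dsum γ]
    exact Finset.single_le_sum (fun s _ => D0 γ s) (Finset.mem_univ s)
  have Dmarg : ∀ γ a b x y, ∑ s, D γ s * (if a = s.1 x then (1 : ℝ) else 0) *
      (if b = s.2 y then (1 : ℝ) else 0) = pa γ x a * pb γ y b := by
    intro γ a b x y
    rw [← sum_prod_mul_indicator _ (pa1 γ) x a, ← sum_prod_mul_indicator _ (pb1 γ) y b,
      Fintype.sum_mul_sum, Fintype.sum_prod_type]
    refine Finset.sum_congr rfl fun f _ => Finset.sum_congr rfl fun f' _ => ?_
    simp only [D]
    ring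
  have pxM : ∀ γ x, px γ x ≤ M γ := fun γ x =>
    Finset.le_sup' (fun x => px γ x) (Finset.mem_univ x)
  have px_le : ∀ γ x, px γ x ≤ 1 := fun γ x => by
    rw [← px1 γ]
    exact Finset.single_le_sum (fun x _ => px0 γ x) (Finset.mem_univ x)
  have M0 : ∀ γ, 0 ≤ M γ := fun γ => (px0 γ (Classical.arbitrary X)).trans (pxM γ _)
  have M1 : ∀ γ, M γ ≤ 1 := fun γ => Finset.sup'_le _ _ fun x _ => px_le γ x
  have mD : ∀ s, Measurable fun γ => D γ s := fun s =>
    (Finset.measurable_prod _ fun x _ => mpa x _).mul (Finset.measurable_prod _ fun y _ => mpb y _)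
  have mM : Measurable M := by
    have := Finset.measurable_sup' (s := Finset.univ) Finset.univ_nonempty
      (f := fun x γ => px γ x) (fun x _ => mpx x)
    convert this using 1
    ext γ
    simp [M, Finset.sup'_apply]
  have iM : Integrable M g := integrable_of_unit g M mM M0 M1
  have iw : ∀ s x, Integrable (fun γ => px γ x * D γ s) g := fun s x =>
    integrable_of_unit g _ ((mpx x).mul (mD s)) (fun γ => mul_nonneg (px0 γ x) (D0 γ s))
      fun γ => mul_le_one₀ (px_le γ x) (D0 γ s) (D1 γ s)
  have ir : ∀ s, Integrable (fun γ => M γ * D γ s) g := fun s =>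
    integrable_of_unit g _ (mM.mul (mD s)) (fun γ => mul_nonneg (M0 γ) (D0 γ s))
      fun γ => mul_le_one₀ (M1 γ) (D0 γ s) (D1 γ s)
  refine ⟨fun s x => ∫ γ, px γ x * D γ s ∂g, fun s => ∫ γ, M γ * D γ s ∂g, ?_, ?_, ?_, ?_, ?_, ?_⟩
  · exact fun s x => integral_nonneg fun γ => mul_nonneg (px0 γ x) (D0 γ s)
  · exact fun s => integral_nonneg fun γ => mul_nonneg (M0 γ) (D0 γ s)
  · simp_rw [← integral_finsetSum _ fun x _ => iw _ x]
    rw [← integral_finsetSum _ fun s _ => integrable_finsetSum _ fun x _ => iw s x]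
    simp_rw [← Finset.sum_mul, px1, one_mul, Dsum]
    simp
  · exact fun s x => integral_mono (iw s x) (ir s) fun γ =>
      mul_le_mul_of_nonneg_right (pxM γ x) (D0 γ s)
  · rw [← integral_finsetSum _ fun s _ => ir s]
    simp_rw [← Finset.mul_sum, Dsum, mul_one]
    have h2 : ∫ γ, (M γ - 1 / (Fintype.card X : ℝ)) ∂g ≤ κ := hleak
    rw [integral_sub iM (integrable_const _)] at h2
    simp only [integral_const, probReal_univ, one_smul] at h2
    linarith
  · intro a b x y
    rw [hrepr]
    simp_rw [← integral_mul_const]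
    rw [← integral_finsetSum _ fun s _ => ((iw s x).mul_const _).mul_const _,
      ← integral_const_mul]
    congr 1
    ext γ
    rw [mul_assoc _ (pa γ x a), ← Dmarg γ a b x y, Finset.mul_sum, Finset.mul_sum]
    refine Finset.sum_congr rfl fun s _ => ?_
    ring

/-- A feasible point of the linear program yields a hidden-variable model whose hidden variable is
the pair of deterministic response functions. -/
lemma memAMDL_of_lp {X Y A B : Type} [Fintype X] [Fintype Y] [Fintype A] [Fintype B]
    [DecidableEq X] [DecidableEq Y] [DecidableEq A] [DecidableEq B] [Nonempty X]
    (κ : ℝ) (P : A → B → X → Y → ℝ)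
    (w : ((X → A) × (Y → B)) → X → ℝ) (r : ((X → A) × (Y → B)) → ℝ)
    (w0 : ∀ s x, 0 ≤ w s x)
    (w1 : (∑ s : (X → A) × (Y → B), ∑ x, w s x) = 1)
    (wr : ∀ (s : (X → A) × (Y → B)) (x : X), w s x ≤ r s)
    (rκ : (∑ s : (X → A) × (Y → B), r s) ≤ 1 / (Fintype.card X : ℝ) + κ)
    (hP : ∀ a b x y, P a b x y =
          (1 / (Fintype.card Y : ℝ)) * ∑ s : (X → A) × (Y → B),
            w s x * (if a = s.1 x then (1 : ℝ) else 0) *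
              (if b = s.2 y then (1 : ℝ) else 0)) : MemAMDL κ P := by
  let q : ((X → A) × (Y → B)) → ℝ := fun s => ∑ x, w s x
  have q0 : ∀ s, 0 ≤ q s := fun s => Finset.sum_nonneg fun x _ => w0 s x
  have wq : ∀ s, q s = 0 → ∀ x, w s x = 0 := fun s hs x =>
    (Finset.sum_eq_zero_iff_of_nonneg fun x _ => w0 s x).1 hs x (Finset.mem_univ x)
  letI : MeasurableSpace ((X → A) × (Y → B)) := ⊤
  let p : PMF ((X → A) × (Y → B)) := PMF.ofFintype (fun s => ENNReal.ofReal (q s)) (by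
    rw [← ENNReal.ofReal_sum_of_nonneg fun s _ => q0 s, w1, ENNReal.ofReal_one])
  have hint : ∀ f : ((X → A) × (Y → B)) → ℝ, ∫ s, f s ∂p.toMeasure = ∑ s, q s * f s := by
    intro f
    rw [PMF.integral_eq_sum]
    refine Finset.sum_congr rfl fun s _ => ?_
    simp [p, PMF.ofFintype_apply, ENNReal.toReal_ofReal (q0 s)]
  let px : ((X → A) × (Y → B)) → X → ℝ := fun s x =>
    if q s = 0 then 1 / (Fintype.card X : ℝ) else w s x / q s
  have qpx : ∀ s x, q s * px s x = w s x := by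
    intro s x
    by_cases hs : q s = 0
    · rw [wq s hs x, hs, zero_mul]
    · simp only [px, hs, if_false]
      field_simp
  refine ⟨{
    HV := (X → A) × (Y → B)
    g := p.toMeasure
    prob := inferInstance
    px := px
    pa := fun s x a => if a = s.1 x then 1 else 0
    pb := fun s y b => if b = s.2 y then 1 else 0
    meas_px := fun x => measurable_from_top
    meas_pa := fun x a => measurable_from_top
    meas_pb := fun y b => measurable_from_top
    px_nonneg := ?_
    px_sum := ?_
    pa_nonneg := fun s x a => by positivity
    pa_sum := fun s x => by simp
    pb_nonneg := fun s y b => by positivity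
    pb_sum := fun s y => by simp
    repr := ?_
    leak := ?_ }⟩
  · intro s x
    by_cases hs : q s = 0
    · simp only [px, hs, if_true]
      positivity
    · simp only [px, hs, if_false]
      exact div_nonneg (w0 s x) (q0 s)
  · intro s
    by_cases hs : q s = 0
    · simp [px, hs]
    · simp only [px, hs, if_false]
      rw [← Finset.sum_div]
      exact div_self hs
  · intro a b x y
    rw [hint, hP, Finset.mul_sum]
    refine Finset.sum_congr rfl fun s _ => ?_
    rw [← qpx s x]
    ring
  · rw [hint]
    have key : ∀ s, q s * (Finset.univ.sup' Finset.univ_nonempty fun x => px s x) ≤ r s := by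
      intro s
      -- The maximum is attained, so the bound reduces to `w s x ≤ r s`.
      obtain ⟨x, -, hx⟩ := Finset.exists_mem_eq_sup' (Finset.univ_nonempty (α := X))
        fun x => px s x
      rw [hx, qpx]
      exact wr s x
    have h3 := Finset.sum_le_sum fun s (_ : s ∈ Finset.univ) => key s
    have h4 : ∑ s, q s * (1 / (Fintype.card X : ℝ)) = 1 / (Fintype.card X : ℝ) := by
      rw [← Finset.sum_mul, w1, one_mul]
    simp_rw [mul_sub]
    rw [Finset.sum_sub_distrib, h4]
    linarith

/-- linear-programming characterization of `AMDL(κ)` via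
deterministic response functions. -/
theorem amdl_lp_characterization
    (X Y A B : Type) [Fintype X] [Fintype Y] [Fintype A] [Fintype B]
    [DecidableEq X] [DecidableEq Y] [DecidableEq A] [DecidableEq B]
    [Nonempty X] [Nonempty Y] [Nonempty A] [Nonempty B]
    (κ : ℝ) (hκ : 0 ≤ κ) (P : A → B → X → Y → ℝ) :
    MemAMDL κ P ↔
      ∃ (w : ((X → A) × (Y → B)) → X → ℝ) (r : ((X → A) × (Y → B)) → ℝ),
        (∀ s x, 0 ≤ w s x) ∧ (∀ s, 0 ≤ r s) ∧
        (∑ s : (X → A) × (Y → B), ∑ x, w s x) = 1 ∧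
        (∀ (s : (X → A) × (Y → B)) (x : X), w s x ≤ r s) ∧
        (∑ s : (X → A) × (Y → B), r s) ≤ 1 / (Fintype.card X : ℝ) + κ ∧
        (∀ a b x y, P a b x y =
          (1 / (Fintype.card Y : ℝ)) * ∑ s : (X → A) × (Y → B),
            w s x * (if a = s.1 x then (1 : ℝ) else 0) *
              (if b = s.2 y then (1 : ℝ) else 0)) := by
  constructor
  · exact lp_of_memAMDL κ P
  · rintro ⟨w, r, w0, _, w1, wr, rκ, hP⟩
    exact memAMDL_of_lp κ P w r w0 w1 wr rκ hP
end

section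
/- Let 𝒳, 𝒴, 𝒜, ℬ be finite nonempty sets, κ ≥ 0 and ϑ > 0, and set h_ϑ := (1/|𝒴|)·(1/|𝒳| + κ + ϑ) and l_ϑ := (1/|𝒴|)·(1 − (|𝒳|−1)·(1/|𝒳| + κ + ϑ)). Let I_ϑ be an affine functional on behaviors with I_ϑ(L) ≤ 0 for all L ∈ MDL(l_ϑ, h_ϑ), and set c_ϑ := max_S I_ϑ(S), the maximum over all probability distributions S on 𝒜×ℬ×𝒳×𝒴. Define the shifted functional I(P) := I_ϑ(P) − c_ϑ·κ/(κ+ϑ). Then I(P) ≤ 0 for every P ∈ AMDL(κ) and I(L) ≤ 0 for every L ∈ MDL(l_ϑ, h_ϑ). -/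
open MeasureTheory

section

variable {X Y A B : Type} [Fintype X] [Fintype Y] [Fintype A] [Fintype B]

theorem isBehavior_local {q : X → Y → ℝ} {pa : X → A → ℝ} {pb : Y → B → ℝ}
    (hq : ∀ x y, 0 ≤ q x y) (hq1 : ∑ x, ∑ y, q x y = 1)
    (ha : ∀ x a, 0 ≤ pa x a) (ha1 : ∀ x, ∑ a, pa x a = 1)
    (hb : ∀ y b, 0 ≤ pb y b) (hb1 : ∀ y, ∑ b, pb y b = 1) :
    IsBehavior (fun a b x y => q x y * pa x a * pb y b) := by
  refine ⟨fun a b x y => mul_nonneg (mul_nonneg (hq x y) (ha x a)) (hb y b), ?_⟩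
  calc ∑ a, ∑ b, ∑ x, ∑ y, q x y * pa x a * pb y b
      = ∑ a, ∑ x, ∑ y, ∑ b, q x y * pa x a * pb y b := by
        refine Finset.sum_congr rfl fun a _ => ?_
        rw [Finset.sum_comm]
        exact Finset.sum_congr rfl fun x _ => Finset.sum_comm
    _ = ∑ a, ∑ x, ∑ y, q x y * pa x a := by simp only [← Finset.mul_sum, hb1, mul_one]
    _ = ∑ x, ∑ y, ∑ a, q x y * pa x a := by
        rw [Finset.sum_comm]
        exact Finset.sum_congr rfl fun x _ => Finset.sum_comm
    _ = 1 := by simp only [← Finset.mul_sum, ha1, mul_one, hq1]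

theorem IsBehavior.le_one {P : A → B → X → Y → ℝ} (hP : IsBehavior P) (a : A) (b : B) (x : X)
    (y : Y) : P a b x y ≤ 1 := by
  obtain ⟨h0, h1⟩ := hP
  have e4 : P a b x y ≤ ∑ y, P a b x y :=
    Finset.single_le_sum (f := fun y => P a b x y) (fun _ _ => h0 _ _ _ _) (Finset.mem_univ y)
  have e3 : ∑ y, P a b x y ≤ ∑ x, ∑ y, P a b x y :=
    Finset.single_le_sum (f := fun x => ∑ y, P a b x y)
      (fun _ _ => Finset.sum_nonneg fun _ _ => h0 _ _ _ _) (Finset.mem_univ x)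
  have e2 : ∑ x, ∑ y, P a b x y ≤ ∑ b, ∑ x, ∑ y, P a b x y :=
    Finset.single_le_sum (f := fun b => ∑ x, ∑ y, P a b x y)
      (fun _ _ => Finset.sum_nonneg fun _ _ => Finset.sum_nonneg fun _ _ => h0 _ _ _ _)
      (Finset.mem_univ b)
  have e1 : ∑ b, ∑ x, ∑ y, P a b x y ≤ ∑ a, ∑ b, ∑ x, ∑ y, P a b x y :=
    Finset.single_le_sum (f := fun a => ∑ b, ∑ x, ∑ y, P a b x y)
      (fun _ _ => Finset.sum_nonneg fun _ _ => Finset.sum_nonneg fun _ _ =>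
        Finset.sum_nonneg fun _ _ => h0 _ _ _ _) (Finset.mem_univ a)
  linarith

/-- The supremum defining `c` is over a bounded set, hence is a genuine upper bound. -/
theorem affFun_le_sSup (I₀ : ℝ) (v : A → B → X → Y → ℝ) {P : A → B → X → Y → ℝ}
    (hP : IsBehavior P) :
    affFun I₀ v P ≤
      sSup {r : ℝ | ∃ S : A → B → X → Y → ℝ, IsBehavior S ∧ r = affFun I₀ v S} := by
  refine le_csSup ⟨I₀ + ∑ a, ∑ b, ∑ x, ∑ y, |v a b x y|, ?_⟩ ⟨P, hP, rfl⟩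
  rintro r ⟨S, hS, rfl⟩
  unfold affFun
  gcongr with a _ b _ x _ y _
  calc v a b x y * S a b x y ≤ |v a b x y| * S a b x y :=
        mul_le_mul_of_nonneg_right (le_abs_self _) (hS.1 _ _ _ _)
    _ ≤ |v a b x y| := mul_le_of_le_one_right (abs_nonneg _) (hS.le_one _ _ _ _)

section Averages

variable {HV : Type} [MeasurableSpace HV] {g : Measure HV} [IsProbabilityMeasure g]
  {F : HV → A → B → X → Y → ℝ}

theorem integrable_of_isBehavior (hm : ∀ a b x y, Measurable fun γ => F γ a b x y)
    (hF : ∀ γ, IsBehavior (F γ)) (a : A) (b : B) (x : X) (y : Y) :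
    Integrable (fun γ => F γ a b x y) g := by
  refine Integrable.of_bound (hm a b x y).aestronglyMeasurable 1 (ae_of_all _ fun γ => ?_)
  rw [Real.norm_of_nonneg ((hF γ).1 _ _ _ _)]
  exact (hF γ).le_one _ _ _ _

theorem integrable_affFun (I₀ : ℝ) (v : A → B → X → Y → ℝ)
    (hF : ∀ a b x y, Integrable (fun γ => F γ a b x y) g) :
    Integrable (fun γ => affFun I₀ v (F γ)) g := by
  unfold affFun
  exact (integrable_const _).add (integrable_finsetSum _ fun a _ => integrable_finsetSum _ fun b _ =>
    integrable_finsetSum _ fun x _ => integrable_finsetSum _ fun y _ => (hF a b x y).const_mul _)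

theorem affFun_integral (I₀ : ℝ) (v : A → B → X → Y → ℝ)
    (hF : ∀ a b x y, Integrable (fun γ => F γ a b x y) g) :
    affFun I₀ v (fun a b x y => ∫ γ, F γ a b x y ∂g) = ∫ γ, affFun I₀ v (F γ) ∂g := by
  have h4 : ∀ a b x y, Integrable (fun γ => v a b x y * F γ a b x y) g :=
    fun a b x y => (hF a b x y).const_mul _
  have h3 : ∀ a b x, Integrable (fun γ => ∑ y, v a b x y * F γ a b x y) g :=
    fun a b x => integrable_finsetSum _ fun y _ => h4 a b x y
  have h2 : ∀ a b, Integrable (fun γ => ∑ x, ∑ y, v a b x y * F γ a b x y) g :=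
    fun a b => integrable_finsetSum _ fun x _ => h3 a b x
  have h1 : ∀ a, Integrable (fun γ => ∑ b, ∑ x, ∑ y, v a b x y * F γ a b x y) g :=
    fun a => integrable_finsetSum _ fun b _ => h2 a b
  unfold affFun
  rw [integral_add (integrable_const _) (integrable_finsetSum _ fun a _ => h1 a),
    integral_finsetSum _ fun a _ => h1 a, integral_const]
  simp only [probReal_univ, one_smul]
  congr 1
  refine Finset.sum_congr rfl fun a _ => ?_
  rw [integral_finsetSum _ fun b _ => h2 a b]
  refine Finset.sum_congr rfl fun b _ => ?_
  rw [integral_finsetSum _ fun x _ => h3 a b x]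
  refine Finset.sum_congr rfl fun x _ => ?_
  rw [integral_finsetSum _ fun y _ => h4 a b x y]
  exact Finset.sum_congr rfl fun y _ => (integral_const_mul _ _).symm

/-- A pointwise bound on the functional along a measurable family of behaviors passes to the
averaged behavior. -/
theorem affFun_integral_le (I₀ : ℝ) (v : A → B → X → Y → ℝ)
    (hm : ∀ a b x y, Measurable fun γ => F γ a b x y) (hF : ∀ γ, IsBehavior (F γ))
    {f : HV → ℝ} (hf : Integrable f g) (h : ∀ γ, affFun I₀ v (F γ) ≤ f γ) :
    affFun I₀ v (fun a b x y => ∫ γ, F γ a b x y ∂g) ≤ ∫ γ, f γ ∂g := by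
  have hi := integrable_of_isBehavior (g := g) hm hF
  rw [affFun_integral I₀ v hi]
  exact integral_mono (integrable_affFun I₀ v hi) hf h

end Averages

/-- A product model whose setting distribution is bounded above by `H` is in `MDL`, with a one-point
hidden variable: normalization turns the upper bound into the lower bound `1 - (|𝒳| - 1) H`. -/
theorem memMDL_of_le [Nonempty Y] {H : ℝ} {p : X → ℝ} {pa : X → A → ℝ} {pb : Y → B → ℝ}
    (hp : ∀ x, 0 ≤ p x) (hp1 : ∑ x, p x = 1) (hH : ∀ x, p x ≤ H)
    (ha : ∀ x a, 0 ≤ pa x a) (ha1 : ∀ x, ∑ a, pa x a = 1)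
    (hb : ∀ y b, 0 ≤ pb y b) (hb1 : ∀ y, ∑ b, pb y b = 1) :
    MemMDL ((1 / (Fintype.card Y : ℝ)) * (1 - ((Fintype.card X : ℝ) - 1) * H))
      ((1 / (Fintype.card Y : ℝ)) * H)
      (fun a b x y => p x * (1 / (Fintype.card Y : ℝ)) * pa x a * pb y b) := by
  classical
  have hY : 0 ≤ 1 / (Fintype.card Y : ℝ) := by positivity
  have hlow : ∀ x, 1 - ((Fintype.card X : ℝ) - 1) * H ≤ p x := by
    intro x
    have h1 : p x + ∑ z ∈ Finset.univ.erase x, p z = 1 := by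
      rw [Finset.add_sum_erase _ _ (Finset.mem_univ x), hp1]
    have h2 : ∑ z ∈ Finset.univ.erase x, p z ≤ ((Fintype.card X : ℝ) - 1) * H := by
      refine (Finset.sum_le_card_nsmul _ _ H fun z _ => hH z).trans_eq ?_
      rw [nsmul_eq_mul, Finset.cast_card_erase_of_mem (Finset.mem_univ x), Finset.card_univ]
    linarith
  exact ⟨{
    HV := Unit
    g := Measure.dirac ()
    prob := inferInstance
    pxy := fun _ x _ => p x * (1 / (Fintype.card Y : ℝ))
    pa := fun _ => pa
    pb := fun _ => pb
    meas_pxy := fun _ _ => measurable_const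
    meas_pa := fun _ _ => measurable_const
    meas_pb := fun _ _ => measurable_const
    pxy_nonneg := fun _ x _ => mul_nonneg (hp x) hY
    pxy_sum := fun _ => by
      simp only [Finset.sum_const, Finset.card_univ, nsmul_eq_mul]
      exact (Finset.sum_congr rfl fun x _ => by field_simp).trans hp1
    pa_nonneg := fun _ => ha
    pa_sum := fun _ => ha1
    pb_nonneg := fun _ => hb
    pb_sum := fun _ => hb1
    lower := fun _ x _ => by
      rw [mul_comm (p x)]
      exact mul_le_mul_of_nonneg_left (hlow x) hY
    upper := fun _ x _ => by
      rw [mul_comm (p x)]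
      exact mul_le_mul_of_nonneg_left (hH x) hY
    repr := fun a b x y => by simp }⟩

end

/-- the shifted functional is a computational Bell inequality:
nonpositive on `AMDL(κ)` and on `MDL(l_ϑ, h_ϑ)`. -/
theorem shifted_functional_bell_inequality
    (X Y A B : Type) [Fintype X] [Fintype Y] [Fintype A] [Fintype B]
    [Nonempty X] [Nonempty Y] [Nonempty A] [Nonempty B]
    (κ ϑ : ℝ) (hκ : 0 ≤ κ) (hϑ : 0 < ϑ)
    (I₀ : ℝ) (v : A → B → X → Y → ℝ)
    (hI : ∀ L : A → B → X → Y → ℝ,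
      MemMDL
        ((1 / (Fintype.card Y : ℝ)) *
          (1 - ((Fintype.card X : ℝ) - 1) * (1 / (Fintype.card X : ℝ) + κ + ϑ)))
        ((1 / (Fintype.card Y : ℝ)) * (1 / (Fintype.card X : ℝ) + κ + ϑ)) L →
      affFun I₀ v L ≤ 0)
    (c : ℝ)
    (hc : c = sSup {r : ℝ | ∃ S : A → B → X → Y → ℝ, IsBehavior S ∧ r = affFun I₀ v S}) :
    (∀ P : A → B → X → Y → ℝ, MemAMDL κ P →
      affFun I₀ v P - c * (κ / (κ + ϑ)) ≤ 0) ∧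
    (∀ L : A → B → X → Y → ℝ,
      MemMDL
        ((1 / (Fintype.card Y : ℝ)) *
          (1 - ((Fintype.card X : ℝ) - 1) * (1 / (Fintype.card X : ℝ) + κ + ϑ)))
        ((1 / (Fintype.card Y : ℝ)) * (1 / (Fintype.card X : ℝ) + κ + ϑ)) L →
      affFun I₀ v L - c * (κ / (κ + ϑ)) ≤ 0) := by
  have hpos : 0 < κ + ϑ := by linarith
  have hle : ∀ S : A → B → X → Y → ℝ, IsBehavior S → affFun I₀ v S ≤ c :=
    fun S hS => hc ▸ affFun_le_sSup I₀ v hS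
  have hneg : c < 0 → c ≤ c * (κ / (κ + ϑ)) := fun h => by
    have : κ / (κ + ϑ) ≤ 1 := (div_le_one hpos).2 (by linarith)
    nlinarith
  constructor
  · rintro P ⟨⟨HV, g, hg, px, pa, pb, mx, ma, mb, hx, hx1, ha, ha1, hb, hb1, hrepr, leak⟩⟩
    have hP : P = fun a b x y =>
        ∫ γ, px γ x * (1 / (Fintype.card Y : ℝ)) * pa γ x a * pb γ y b ∂g := by
      funext a b x y
      exact hrepr a b x y
    have hm : ∀ a b x y, Measurable fun γ =>
        px γ x * (1 / (Fintype.card Y : ℝ)) * pa γ x a * pb γ y b :=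
      fun a b x y => (((mx x).mul_const _).mul (ma x a)).mul (mb y b)
    have hF : ∀ γ, IsBehavior fun a b x y =>
        px γ x * (1 / (Fintype.card Y : ℝ)) * pa γ x a * pb γ y b := by
      intro γ
      refine isBehavior_local (q := fun x _ => px γ x * (1 / (Fintype.card Y : ℝ)))
        (fun x _ => mul_nonneg (hx γ x) (by positivity)) ?_ (ha γ) (ha1 γ) (hb γ) (hb1 γ)
      simp only [Finset.sum_const, Finset.card_univ, nsmul_eq_mul]
      exact (Finset.sum_congr rfl fun x _ => by field_simp).trans (hx1 γ)
    rw [sub_nonpos, hP]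
    rcases lt_or_ge c 0 with hc0 | hc0
    · refine le_trans ?_ (hneg hc0)
      have := affFun_integral_le (g := g) I₀ v hm hF (integrable_const c) fun γ => hle _ (hF γ)
      simpa using this
    · set M : HV → ℝ := fun γ => Finset.univ.sup' Finset.univ_nonempty fun x => px γ x with hM
      have hxM : ∀ γ x, px γ x ≤ M γ := fun γ x =>
        Finset.le_sup' (fun x => px γ x) (Finset.mem_univ x)
      have hcard : (0 : ℝ) < Fintype.card X := by exact_mod_cast Fintype.card_pos
      have hMlow : ∀ γ, 1 / (Fintype.card X : ℝ) ≤ M γ := by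
        intro γ
        rw [div_le_iff₀ hcard, ← hx1 γ]
        refine (Finset.sum_le_card_nsmul _ _ _ fun x _ => hxM γ x).trans_eq ?_
        rw [nsmul_eq_mul, Finset.card_univ, mul_comm]
      have hMup : ∀ γ, M γ ≤ 1 := fun γ => Finset.sup'_le _ _ fun x _ => by
        rw [← hx1 γ]
        exact Finset.single_le_sum (fun z _ => hx γ z) (Finset.mem_univ x)
      have hMm : Measurable M := by
        have := Finset.measurable_sup' (f := fun x γ => px γ x)
          (Finset.univ_nonempty (α := X)) fun x _ => mx x
        convert this using 1
        funext γ
        simp [hM, Finset.sup'_apply]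
      have hMi : Integrable M g := by
        refine Integrable.of_bound hMm.aestronglyMeasurable 1 (ae_of_all _ fun γ => ?_)
        rw [Real.norm_of_nonneg (le_trans (by positivity) (hMlow γ))]
        exact hMup γ
      have hMi' : Integrable (fun γ => M γ - 1 / (Fintype.card X : ℝ)) g :=
        hMi.sub (integrable_const _)
      have key := affFun_integral_le (g := g) I₀ v hm hF
        (hMi'.const_mul (c / (κ + ϑ))) fun γ => by
          have hr : 0 ≤ c / (κ + ϑ) := by positivity
          by_cases hγ : M γ ≤ 1 / (Fintype.card X : ℝ) + κ + ϑ
          · exact (hI _ (memMDL_of_le (hx γ) (hx1 γ) (fun x => (hxM γ x).trans hγ) (ha γ)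
              (ha1 γ) (hb γ) (hb1 γ))).trans (mul_nonneg hr (sub_nonneg.2 (hMlow γ)))
          · refine (hle _ (hF γ)).trans ?_
            calc c = c / (κ + ϑ) * (κ + ϑ) := by field_simp
              _ ≤ _ := mul_le_mul_of_nonneg_left (by linarith) hr
      refine key.trans ?_
      rw [integral_const_mul]
      calc _ ≤ c / (κ + ϑ) * κ := mul_le_mul_of_nonneg_left leak (by positivity)
        _ = c * (κ / (κ + ϑ)) := by ring
  · intro L hL
    rw [sub_nonpos]
    rcases lt_or_ge c 0 with hc0 | hc0
    · obtain ⟨⟨HV, g, hg, q, pa, pb, mq, ma, mb, hq, hq1, ha, ha1, hb, hb1, _, _, hrepr⟩⟩ := hL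
      have hLe : L = fun a b x y => ∫ γ, q γ x y * pa γ x a * pb γ y b ∂g := by
        funext a b x y
        exact hrepr a b x y
      rw [hLe]
      have hF : ∀ γ, IsBehavior fun a b x y => q γ x y * pa γ x a * pb γ y b :=
        fun γ => isBehavior_local (hq γ) (hq1 γ) (ha γ) (ha1 γ) (hb γ) (hb1 γ)
      refine le_trans ?_ (hneg hc0)
      have := affFun_integral_le (g := g) I₀ v
        (fun a b x y => ((mq x y).mul (ma x a)).mul (mb y b)) hF (integrable_const c)
        fun γ => hle _ (hF γ)
      simpa using this
    · exact (hI L hL).trans (by positivity)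
end

section
/- Let κ ≥ 0 and ϑ > 0 with κ + ϑ ≤ 1/2, and work in the Bell scenario 𝒳 = 𝒴 = 𝒜 = ℬ = {0,1}. Define the affine functional I_ϑ on behaviors P(a,b,x,y) by I_ϑ(P) := (1/2)·(1/2 − κ − ϑ)·P(0,0,0,0) − (1/2)·(1/2 + κ + ϑ)·(P(0,1,0,1) + P(1,0,1,0) + P(0,0,1,1)), where the arguments of P are ordered (a,b,x,y). Then for every behavior P ∈ AMDL(κ), I_ϑ(P) ≤ (1/4)·(κ/(κ+ϑ))·(1/2 − κ − ϑ); equivalently, the shifted functional I(P) := I_ϑ(P) − (1/4)·(κ/(κ+ϑ))·(1/2 − κ − ϑ) satisfies I(P) ≤ 0 on AMDL(κ). -/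
open MeasureTheory

/-- The contribution of a single local strategy; since `L ≤ H`, the deterministic strategies
that can give a positive value are those with `u = r = s = 1`. -/
lemma local_le {L H p q u v r s : ℝ} (hLH : L ≤ H) (hH : 0 ≤ H) (hp : 0 ≤ p) (hq : 0 ≤ q)
    (hu : 0 ≤ u) (hu1 : u ≤ 1) (hv : 0 ≤ v) (hv1 : v ≤ 1) (hr : 0 ≤ r) (hr1 : r ≤ 1)
    (hs : 0 ≤ s) (hs1 : s ≤ 1) :
    L * (p * u * r) - H * (p * u * (1 - s) + q * (1 - v) * r + q * v * s)
      ≤ u * r * s * (L * p - H * q) := by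
  have hs' := sub_nonneg.2 hs1
  have hv' := sub_nonneg.2 hv1
  have hr' := sub_nonneg.2 hr1
  have hu' := sub_nonneg.2 hu1
  have h1 : 0 ≤ (H - L) * (p * u * r * (1 - s)) :=
    mul_nonneg (sub_nonneg.2 hLH) (by positivity)
  have h2 : 0 ≤ H * (p * u * (1 - s) * (1 - r)) := by positivity
  have h3 : 0 ≤ H * (q * (1 - v) * r * (1 - u)) := by positivity
  have h4 : 0 ≤ H * (q * v * s * (1 - u * r)) :=
    mul_nonneg hH (mul_nonneg (by positivity) (sub_nonneg.2 (mul_le_one₀ hu1 hr hr1)))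
  have h5 : 0 ≤ H * (q * (u * r) * ((1 - v) * (1 - s))) := by positivity
  linarith

lemma bias_le {t p q m : ℝ} (ht : 0 < t) (ht2 : t ≤ 1 / 2) (hpq : p + q = 1) (hq : 0 ≤ q)
    (hpm : p ≤ m) (hqm : q ≤ m) :
    (1 / 2 - t) * p - (1 / 2 + t) * q ≤ (1 / 2 - t) / t * (m - 1 / 2) := by
  rw [div_mul_eq_mul_div, le_div_iff₀ ht]
  obtain rfl : q = 1 - p := by linarith
  have hL := sub_nonneg.2 ht2
  rcases le_total p (1 / 2) with h | h
  · have h1 : 0 ≤ (1 / 2 - t) * (m - 1 / 2) := mul_nonneg hL (by linarith)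
    nlinarith
  · have h1 := mul_le_mul_of_nonneg_left hpm hL
    -- With `m = p` the difference of the two sides is affine in `p`, with value `t ^ 2` at
    -- `p = 1 / 2` and `(1 / 2 - t) ^ 2` at `p = 1`; it is the sum of `h2` and twice `h3`.
    have h2 : 0 ≤ (2 * p - 1) * (1 / 2 - t) ^ 2 := mul_nonneg (by linarith) (sq_nonneg _)
    have h3 : 0 ≤ (1 - p) * t ^ 2 := by positivity
    nlinarith

/-- the computational CHSH-scenario inequality holds on `AMDL(κ)`. -/
theorem amdl_computational_inequality_2222
    (κ ϑ : ℝ) (hκ : 0 ≤ κ) (hϑ : 0 < ϑ) (hsum : κ + ϑ ≤ 1 / 2)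
    (P : Fin 2 → Fin 2 → Fin 2 → Fin 2 → ℝ) (hP : MemAMDL κ P) :
    (1 / 2) * (1 / 2 - κ - ϑ) * P 0 0 0 0
      - (1 / 2) * (1 / 2 + κ + ϑ) * (P 0 1 0 1 + P 1 0 1 0 + P 0 0 1 1)
      ≤ (1 / 4) * (κ / (κ + ϑ)) * (1 / 2 - κ - ϑ) := by
  obtain ⟨W⟩ := hP
  let _ := W.mHV
  have := W.prob
  have ht : 0 < κ + ϑ := by linarith
  have hpx : ∀ γ, W.px γ 0 + W.px γ 1 = 1 := fun γ => by simpa using W.px_sum γ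
  have hpa : ∀ γ x, W.pa γ x 0 + W.pa γ x 1 = 1 := fun γ x => by simpa using W.pa_sum γ x
  have hpb : ∀ γ y, W.pb γ y 0 + W.pb γ y 1 = 1 := fun γ y => by simpa using W.pb_sum γ y
  have px1 : ∀ γ x, W.px γ x ≤ 1 := fun γ x =>
    W.px_sum γ ▸ Finset.single_le_sum (fun i _ => W.px_nonneg γ i) (Finset.mem_univ x)
  have pa1 : ∀ γ x a, W.pa γ x a ≤ 1 := fun γ x a =>
    W.pa_sum γ x ▸ Finset.single_le_sum (fun i _ => W.pa_nonneg γ x i) (Finset.mem_univ a)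
  have pb1 : ∀ γ y b, W.pb γ y b ≤ 1 := fun γ y b =>
    W.pb_sum γ y ▸ Finset.single_le_sum (fun i _ => W.pb_nonneg γ y i) (Finset.mem_univ b)
  have hint : ∀ a b x y, Integrable (fun γ =>
      W.px γ x * (1 / (Fintype.card (Fin 2) : ℝ)) * W.pa γ x a * W.pb γ y b) W.g := by
    intro a b x y
    have := W.meas_px x
    have := W.meas_pa x a
    have := W.meas_pb y b
    refine Integrable.of_bound (C := 1) (by fun_prop) (ae_of_all _ fun γ => ?_)
    have h1 := W.px_nonneg γ x
    have h2 := W.pa_nonneg γ x a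
    have h3 := W.pb_nonneg γ y b
    rw [Real.norm_of_nonneg (by positivity)]
    refine mul_le_one₀ (mul_le_one₀ (mul_le_one₀ (px1 γ x) (by positivity) ?_) h2 (pa1 γ x a))
      h3 (pb1 γ y b)
    norm_num
  have hsup : ∀ γ, (Finset.univ.sup' Finset.univ_nonempty fun x => W.px γ x)
      = max (W.px γ 0) (W.px γ 1) := by
    intro γ
    apply le_antisymm
    · refine Finset.sup'_le _ _ fun x _ => ?_
      fin_cases x
      · exact le_max_left _ _
      · exact le_max_right _ _
    · exact max_le (Finset.le_sup' (fun x => W.px γ x) (Finset.mem_univ 0))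
        (Finset.le_sup' (fun x => W.px γ x) (Finset.mem_univ 1))
  have hleak : ∫ γ, (max (W.px γ 0) (W.px γ 1) - 1 / 2) ∂W.g ≤ κ := by
    have h := W.leak
    simp only [hsup, Fintype.card_fin, Nat.cast_ofNat] at h
    exact h
  have hintm : Integrable (fun γ => max (W.px γ 0) (W.px γ 1) - 1 / 2) W.g := by
    have hx : ∀ x, Integrable (fun γ => W.px γ x) W.g := fun x =>
      Integrable.of_bound (C := 1) (W.meas_px x).aestronglyMeasurable
        (ae_of_all _ fun γ => by
          rw [Real.norm_of_nonneg (W.px_nonneg γ x)]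
          exact px1 γ x)
    exact ((hx 0).sup (hx 1)).sub (integrable_const _)
  have hc : 0 ≤ (1 / 2 - (κ + ϑ)) / (κ + ϑ) := div_nonneg (by linarith) ht.le
  have hint2 := (hint 0 1 0 1).fun_add (hint 1 0 1 0)
  have hint3 := hint2.fun_add (hint 0 0 1 1)
  rw [W.repr 0 0 0 0, W.repr 0 1 0 1, W.repr 1 0 1 0, W.repr 0 0 1 1,
    ← integral_add (hint _ _ _ _) (hint _ _ _ _),
    ← integral_add hint2 (hint _ _ _ _),
    ← integral_const_mul, ← integral_const_mul,
    ← integral_sub ((hint _ _ _ _).const_mul _)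
      (hint3.const_mul _)]
  calc _ ≤ ∫ γ, 1 / 4 * ((1 / 2 - (κ + ϑ)) / (κ + ϑ))
            * (max (W.px γ 0) (W.px γ 1) - 1 / 2) ∂W.g := by
        refine integral_mono (((hint _ _ _ _).const_mul _).sub
          (hint3.const_mul _))
          (hintm.const_mul _) fun γ => ?_
        have h1 := local_le (L := 1 / 2 - (κ + ϑ)) (H := 1 / 2 + (κ + ϑ))
          (by linarith) (by linarith) (W.px_nonneg γ 0) (W.px_nonneg γ 1)
          (W.pa_nonneg γ 0 0) (pa1 γ 0 0) (W.pa_nonneg γ 1 0) (pa1 γ 1 0)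
          (W.pb_nonneg γ 0 0) (pb1 γ 0 0) (W.pb_nonneg γ 1 0) (pb1 γ 1 0)
        have h2 := bias_le ht hsum (hpx γ) (W.px_nonneg γ 1)
          (le_max_left (W.px γ 0) (W.px γ 1)) (le_max_right _ _)
        have hm : 0 ≤ max (W.px γ 0) (W.px γ 1) - 1 / 2 := by
          linarith [hpx γ, le_max_left (W.px γ 0) (W.px γ 1), le_max_right (W.px γ 0) (W.px γ 1)]
        have hw0 : 0 ≤ W.pa γ 0 0 * W.pb γ 0 0 * W.pb γ 1 0 :=
          mul_nonneg (mul_nonneg (W.pa_nonneg γ 0 0) (W.pb_nonneg γ 0 0)) (W.pb_nonneg γ 1 0)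
        have hw1 : W.pa γ 0 0 * W.pb γ 0 0 * W.pb γ 1 0 ≤ 1 :=
          mul_le_one₀ (mul_le_one₀ (pa1 γ 0 0) (W.pb_nonneg γ 0 0) (pb1 γ 0 0))
            (W.pb_nonneg γ 1 0) (pb1 γ 1 0)
        have h3 := (mul_le_mul_of_nonneg_left h2 hw0).trans
          (mul_le_of_le_one_left (mul_nonneg hc hm) hw1)
        have h4 := h1.trans h3
        have ea : W.pa γ 1 1 = 1 - W.pa γ 1 0 := by linarith [hpa γ 1]
        have eb : W.pb γ 1 1 = 1 - W.pb γ 1 0 := by linarith [hpb γ 1]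
        simp only [ea, eb, Fintype.card_fin, Nat.cast_ofNat]
        linarith
    _ ≤ 1 / 4 * ((1 / 2 - (κ + ϑ)) / (κ + ϑ)) * κ := by
        rw [integral_const_mul]
        exact mul_le_mul_of_nonneg_left hleak (by positivity)
    _ = (1 / 4) * (κ / (κ + ϑ)) * (1 / 2 - κ - ϑ) := by ring
end

section
/- Let 0 ≤ l ≤ h ≤ 1 and work in the Bell scenario 𝒳 = 𝒴 = 𝒜 = ℬ = {0,1}. Then for every behavior P ∈ MDL(l, h), l·P(0,0,0,0) − h·(P(0,1,0,1) + P(1,0,1,0) + P(0,0,1,1)) ≤ 0, where the arguments of P are ordered (a,b,x,y). -/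
/-- The CHSH inequality in Hardy form for local response functions, where `a₀, a₁, b₀, b₁` are the
probabilities of output `0`. After multiplying each term on the right by suitable factors in
`[0, 1]`, it reduces to `a₀ b₀ (1 - a₁) (1 - b₁) ≥ 0`. -/
theorem local_hardy_inequality {a₀ a₁ b₀ b₁ : ℝ} (ha₀ : 0 ≤ a₀) (ha₀' : a₀ ≤ 1)
    (ha₁ : 0 ≤ a₁) (ha₁' : a₁ ≤ 1) (hb₀ : 0 ≤ b₀) (hb₀' : b₀ ≤ 1)
    (hb₁ : 0 ≤ b₁) (hb₁' : b₁ ≤ 1) :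
    a₀ * b₀ ≤ a₀ * (1 - b₁) + (1 - a₁) * b₀ + a₁ * b₁ := by
  have h1 : 0 ≤ a₀ * (1 - b₁) * (1 - b₀) :=
    mul_nonneg (mul_nonneg ha₀ (by linarith)) (by linarith)
  have h2 : 0 ≤ (1 - a₁) * b₀ * (1 - a₀) :=
    mul_nonneg (mul_nonneg (by linarith) hb₀) (by linarith)
  have h3 : 0 ≤ a₁ * b₁ * (1 - a₀ * b₀) :=
    mul_nonneg (mul_nonneg ha₁ hb₁) (by nlinarith)
  have h4 : 0 ≤ a₀ * b₀ * ((1 - a₁) * (1 - b₁)) :=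
    mul_nonneg (mul_nonneg ha₀ hb₀) (mul_nonneg (by linarith) (by linarith))
  linarith

/-- CHSH MDL inequality of Pütz et al. for `MDL(l,h)`. -/
theorem chsh_mdl_inequality
    (l h : ℝ) (hl : 0 ≤ l) (hlh : l ≤ h) (hh : h ≤ 1)
    (P : Fin 2 → Fin 2 → Fin 2 → Fin 2 → ℝ) (hP : MemMDL l h P) :
    l * P 0 0 0 0 - h * (P 0 1 0 1 + P 1 0 1 0 + P 0 0 1 1) ≤ 0 := by
  obtain ⟨W⟩ := hP
  let _ := W.mHV
  have := W.prob
  have hpa : ∀ γ x, W.pa γ x 0 + W.pa γ x 1 = 1 := fun γ x => by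
    simpa [Fin.sum_univ_two] using W.pa_sum γ x
  have hpb : ∀ γ y, W.pb γ y 0 + W.pb γ y 1 = 1 := fun γ y => by
    simpa [Fin.sum_univ_two] using W.pb_sum γ y
  have hpa1 : ∀ γ x a, W.pa γ x a ≤ 1 := fun γ x a => by
    rw [← W.pa_sum γ x]
    exact Finset.single_le_sum (fun i _ => W.pa_nonneg γ x i) (Finset.mem_univ a)
  have hpb1 : ∀ γ y b, W.pb γ y b ≤ 1 := fun γ y b => by
    rw [← W.pb_sum γ y]
    exact Finset.single_le_sum (fun i _ => W.pb_nonneg γ y i) (Finset.mem_univ b)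
  have hint : ∀ a b x y,
      MeasureTheory.Integrable (fun γ => W.pxy γ x y * W.pa γ x a * W.pb γ y b) W.g := by
    intro a b x y
    refine MeasureTheory.Integrable.of_bound (C := 1)
      (((W.meas_pxy x y).mul (W.meas_pa x a)).mul (W.meas_pb y b)).aestronglyMeasurable
      (Filter.Eventually.of_forall fun γ => ?_)
    have hx := W.pxy_nonneg γ x y
    have ha := W.pa_nonneg γ x a
    have hb := W.pb_nonneg γ y b
    rw [Real.norm_of_nonneg (by positivity)]
    exact mul_le_one₀ (mul_le_one₀ ((W.upper γ x y).trans hh) ha (hpa1 γ x a)) hb (hpb1 γ y b)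
  have hlocal : ∀ γ, l * (W.pxy γ 0 0 * W.pa γ 0 0 * W.pb γ 0 0) ≤
      h * (W.pxy γ 0 1 * W.pa γ 0 0 * W.pb γ 1 1 + W.pxy γ 1 0 * W.pa γ 1 1 * W.pb γ 0 0
        + W.pxy γ 1 1 * W.pa γ 1 0 * W.pb γ 1 0) := by
    intro γ
    have hA := W.pa_nonneg γ
    have hB := W.pb_nonneg γ
    have hh0 : 0 ≤ h := hl.trans hlh
    have key := local_hardy_inequality (hA 0 0) (hpa1 γ 0 0) (hA 1 0) (hpa1 γ 1 0)
      (hB 0 0) (hpb1 γ 0 0) (hB 1 0) (hpb1 γ 1 0)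
    rw [← eq_sub_of_add_eq' (hpb γ 1), ← eq_sub_of_add_eq' (hpa γ 1)] at key
    have low : ∀ a b x y, l * (W.pa γ x a * W.pb γ y b) ≤ W.pxy γ x y * W.pa γ x a * W.pb γ y b :=
      fun a b x y => by
        rw [mul_assoc]
        exact mul_le_mul_of_nonneg_right (W.lower γ x y) (mul_nonneg (hA x a) (hB y b))
    calc l * (W.pxy γ 0 0 * W.pa γ 0 0 * W.pb γ 0 0)
        = W.pxy γ 0 0 * (l * (W.pa γ 0 0 * W.pb γ 0 0)) := by ring
      _ ≤ h * (l * (W.pa γ 0 0 * W.pb γ 0 0)) :=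
          mul_le_mul_of_nonneg_right (W.upper γ 0 0)
            (mul_nonneg hl (mul_nonneg (hA 0 0) (hB 0 0)))
      _ ≤ h * (l * (W.pa γ 0 0 * W.pb γ 1 1 + W.pa γ 1 1 * W.pb γ 0 0
            + W.pa γ 1 0 * W.pb γ 1 0)) :=
          mul_le_mul_of_nonneg_left (mul_le_mul_of_nonneg_left key hl) hh0
      _ ≤ _ := mul_le_mul_of_nonneg_left
          (by linarith [low 0 1 0 1, low 1 0 1 0, low 0 0 1 1]) hh0
  rw [W.repr, W.repr, W.repr, W.repr, sub_nonpos,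
    ← MeasureTheory.integral_add (hint 0 1 0 1) (hint 1 0 1 0),
    ← MeasureTheory.integral_add ((hint 0 1 0 1).fun_add (hint 1 0 1 0)) (hint 0 0 1 1),
    ← MeasureTheory.integral_const_mul, ← MeasureTheory.integral_const_mul]
  exact MeasureTheory.integral_mono ((hint 0 0 0 0).const_mul l)
    ((((hint 0 1 0 1).add (hint 1 0 1 0)).add (hint 0 0 1 1)).const_mul h) hlocal
end

section
/- Let 𝒳, 𝒴, 𝒜, ℬ be finite nonempty sets and κ ≥ 0. Then the one-sided average measurement-dependent local set AMDL(κ), viewed as a subset of ℝ^(𝒜×ℬ×𝒳×𝒴), is a convex set: if P₀, P₁ ∈ AMDL(κ) and t ∈ [0,1], then t·P₀ + (1−t)·P₁ ∈ AMDL(κ). -/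
open MeasureTheory in
/-- The mixture `t · μ + (1 - t) · ν` on the disjoint union. The weights go through
`ENNReal.ofReal`, so it is the intended object only for `0 ≤ t ≤ 1`. -/
noncomputable def mixMeasure {Γ₀ Γ₁ : Type} [MeasurableSpace Γ₀] [MeasurableSpace Γ₁]
    (t : ℝ) (μ : Measure Γ₀) (ν : Measure Γ₁) : Measure (Γ₀ ⊕ Γ₁) :=
  ENNReal.ofReal t • μ.map Sum.inl + ENNReal.ofReal (1 - t) • ν.map Sum.inr

open MeasureTheory in
lemma isProbabilityMeasure_mixMeasure {Γ₀ Γ₁ : Type} [MeasurableSpace Γ₀] [MeasurableSpace Γ₁]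
    {t : ℝ} (ht0 : 0 ≤ t) (ht1 : t ≤ 1) (μ : Measure Γ₀) (ν : Measure Γ₁)
    [IsProbabilityMeasure μ] [IsProbabilityMeasure ν] :
    IsProbabilityMeasure (mixMeasure t μ ν) := by
  constructor
  have h₀ : IsProbabilityMeasure (μ.map (Sum.inl : Γ₀ → Γ₀ ⊕ Γ₁)) :=
    Measure.isProbabilityMeasure_map measurable_inl.aemeasurable
  have h₁ : IsProbabilityMeasure (ν.map (Sum.inr : Γ₁ → Γ₀ ⊕ Γ₁)) :=
    Measure.isProbabilityMeasure_map measurable_inr.aemeasurable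
  simp only [mixMeasure, Measure.add_apply, Measure.smul_apply, measure_univ, smul_eq_mul, mul_one]
  rw [← ENNReal.ofReal_add ht0 (by linarith)]
  simp

open MeasureTheory in
lemma integral_mixMeasure {Γ₀ Γ₁ : Type} [MeasurableSpace Γ₀] [MeasurableSpace Γ₁]
    {t : ℝ} (ht0 : 0 ≤ t) (ht1 : t ≤ 1) (μ : Measure Γ₀) (ν : Measure Γ₁)
    [IsProbabilityMeasure μ] [IsProbabilityMeasure ν] {f : Γ₀ ⊕ Γ₁ → ℝ} (hf : Measurable f)
    (C : ℝ) (hC : ∀ γ, |f γ| ≤ C) :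
    ∫ γ, f γ ∂(mixMeasure t μ ν)
      = t * ∫ γ, f (Sum.inl γ) ∂μ + (1 - t) * ∫ γ, f (Sum.inr γ) ∂ν := by
  have hint : ∀ ρ : Measure (Γ₀ ⊕ Γ₁), IsFiniteMeasure ρ → Integrable f ρ := fun ρ _ =>
    Integrable.of_bound hf.aestronglyMeasurable C (Filter.Eventually.of_forall hC)
  have h₀ : Integrable f (μ.map Sum.inl) := hint _ inferInstance
  have h₁ : Integrable f (ν.map Sum.inr) := hint _ inferInstance
  rw [mixMeasure, integral_add_measure (h₀.smul_measure ENNReal.ofReal_ne_top)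
      (h₁.smul_measure ENNReal.ofReal_ne_top), integral_smul_measure, integral_smul_measure,
    integral_map measurable_inl.aemeasurable hf.aestronglyMeasurable,
    integral_map measurable_inr.aemeasurable hf.aestronglyMeasurable,
    ENNReal.toReal_ofReal ht0, ENNReal.toReal_ofReal (by linarith), smul_eq_mul, smul_eq_mul]

lemma le_one_of_sum_eq_one {ι : Type} [Fintype ι] {p : ι → ℝ} (h0 : ∀ i, 0 ≤ p i)
    (h1 : ∑ i, p i = 1) (i : ι) : p i ≤ 1 :=
  h1 ▸ Finset.single_le_sum (fun j _ => h0 j) (Finset.mem_univ i)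

/-- `AMDL(κ)` is convex. -/
theorem amdl_convex
    (X Y A B : Type) [Fintype X] [Fintype Y] [Fintype A] [Fintype B]
    [Nonempty X] [Nonempty Y] [Nonempty A] [Nonempty B]
    (κ : ℝ) (hκ : 0 ≤ κ)
    (P₀ P₁ : A → B → X → Y → ℝ) (h₀ : MemAMDL κ P₀) (h₁ : MemAMDL κ P₁)
    (t : ℝ) (ht0 : 0 ≤ t) (ht1 : t ≤ 1) :
    MemAMDL κ (fun a b x y => t * P₀ a b x y + (1 - t) * P₁ a b x y) := by
  obtain ⟨Γ₀, g₀, hg₀, px₀, pa₀, pb₀, mx₀, ma₀, mb₀, nx₀, sx₀, na₀, sa₀, nb₀, sb₀, r₀, l₀⟩ := h₀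
  obtain ⟨Γ₁, g₁, hg₁, px₁, pa₁, pb₁, mx₁, ma₁, mb₁, nx₁, sx₁, na₁, sa₁, nb₁, sb₁, r₁, l₁⟩ := h₁
  let px : Γ₀ ⊕ Γ₁ → X → ℝ := Sum.elim px₀ px₁
  let pa : Γ₀ ⊕ Γ₁ → X → A → ℝ := Sum.elim pa₀ pa₁
  let pb : Γ₀ ⊕ Γ₁ → Y → B → ℝ := Sum.elim pb₀ pb₁
  have mx : ∀ x, Measurable fun γ => px γ x := fun x => measurable_fun_sum (mx₀ x) (mx₁ x)
  have ma : ∀ x a, Measurable fun γ => pa γ x a := fun x a =>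
    measurable_fun_sum (ma₀ x a) (ma₁ x a)
  have mb : ∀ y b, Measurable fun γ => pb γ y b := fun y b =>
    measurable_fun_sum (mb₀ y b) (mb₁ y b)
  have nx : ∀ γ x, 0 ≤ px γ x := Sum.rec nx₀ nx₁
  have sx : ∀ γ, ∑ x, px γ x = 1 := Sum.rec sx₀ sx₁
  have na : ∀ γ x a, 0 ≤ pa γ x a := Sum.rec na₀ na₁
  have sa : ∀ γ x, ∑ a, pa γ x a = 1 := Sum.rec sa₀ sa₁
  have nb : ∀ γ y b, 0 ≤ pb γ y b := Sum.rec nb₀ nb₁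
  have sb : ∀ γ y, ∑ b, pb γ y b = 1 := Sum.rec sb₀ sb₁
  refine ⟨⟨Γ₀ ⊕ Γ₁, mixMeasure t g₀ g₁, isProbabilityMeasure_mixMeasure ht0 ht1 g₀ g₁,
    px, pa, pb, mx, ma, mb, nx, sx, na, sa, nb, sb, fun a b x y => ?_, ?_⟩⟩
  · have hx := fun γ => le_one_of_sum_eq_one (nx γ) (sx γ) x
    have ha := fun γ => le_one_of_sum_eq_one (na γ x) (sa γ x) a
    have hb := fun γ => le_one_of_sum_eq_one (nb γ y) (sb γ y) b
    have hY : (0 : ℝ) ≤ 1 / (Fintype.card Y : ℝ) := by positivity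
    have hm : Measurable fun γ => px γ x * (1 / (Fintype.card Y : ℝ)) * pa γ x a * pb γ y b :=
      (((mx x).mul_const _).mul (ma x a)).mul (mb y b)
    rw [integral_mixMeasure ht0 ht1 g₀ g₁ hm (1 * (1 / (Fintype.card Y : ℝ)) * 1 * 1)
      fun γ => ?_, r₀, r₁]
    · rfl
    · have h1 := nx γ x
      have h2 := na γ x a
      have h3 := nb γ y b
      rw [abs_of_nonneg (by positivity)]
      gcongr
      exacts [hx γ, ha γ, hb γ]
  · have hm : Measurable fun γ => Finset.univ.sup' Finset.univ_nonempty fun x => px γ x := by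
      convert Finset.measurable_sup' Finset.univ_nonempty (f := fun x γ => px γ x)
        fun x (_ : x ∈ Finset.univ) => mx x using 2 with γ
      rw [Finset.sup'_apply]
    have hs : ∀ γ, |Finset.univ.sup' Finset.univ_nonempty fun x => px γ x| ≤ 1 := fun γ => by
      obtain ⟨x, -, hx⟩ := Finset.exists_mem_eq_sup' Finset.univ_nonempty fun x => px γ x
      rw [hx, abs_of_nonneg (nx γ x)]
      exact le_one_of_sum_eq_one (nx γ) (sx γ) x
    rw [integral_mixMeasure ht0 ht1 g₀ g₁ (hm.sub_const _) (1 + |1 / (Fintype.card X : ℝ)|)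
      fun γ => (abs_sub _ _).trans (by gcongr; exact hs γ)]
    have e₀ := mul_le_mul_of_nonneg_left l₀ ht0
    have e₁ := mul_le_mul_of_nonneg_left l₁ (sub_nonneg.2 ht1)
    calc _ ≤ t * κ + (1 - t) * κ := add_le_add e₀ e₁
      _ = κ := by ring
end
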